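/- arXiv:2506.08281 — 5 statements merged into one kernel-verified Lean document; each statement's English description precedes it below -/
import Mathlib

section
/- Let Ω ⊂ ℝ^d (d ≥ 2) be a domain and let L u = tr(A D²u) + b·Du + c u, where A is symmetric and satisfies λ|ξ|² ≤ a^{ij}(x)ξ^i ξ^j ≤ Λ|ξ|² for all x ∈ Ω, ξ ∈ ℝ^d. Assume A ∈ C^α(Ω), b ∈ C^{1,α}(Ω), c ∈ C^{1,α}(Ω), and f ∈ C^{1,α}(Ω) for some α ∈ (0,1). Let u ∈ C²_loc(Ω) be a solution of L u = f in Ω with D²u(x^o) = 0 at some x^o ∈ Ω. Then the third derivative D³u(x^o) exists and there is a constant C such that |D²u(x) − ⟨D³u(x^o), x − x^o⟩| ≤ C |x − x^o|^{1+α} for all x sufficiently close to x^o; that is, u enjoys C^{3,α} regularity at any point where its Hessian vanishes. -/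
open MeasureTheory Metric Filter
open scoped RealInnerProductSpace ENNReal Topology

noncomputable section

/-- Euclidean space `ℝ^d`. -/
abbrev Euc (d : ℕ) := EuclideanSpace ℝ (Fin d)

/-- The mean oscillation function `ω_f(r) = sup_{x ∈ Ω} ⨍_{Ω ∩ B_r(x)} |f - (f)_{Ω ∩ B_r(x)}|`. -/
noncomputable def meanOsc {d : ℕ} {F : Type*} [NormedAddCommGroup F] [NormedSpace ℝ F]
    (Ω : Set (Euc d)) (f : Euc d → F) (r : ℝ) : ℝ :=
  ⨆ x : Ω, ⨍ y in Ω ∩ ball (x : Euc d) r, ‖f y - ⨍ z in Ω ∩ ball (x : Euc d) r, f z‖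

/-- `f` has Dini mean oscillation on `Ω`: `∫₀¹ ω_f(r)/r dr < ∞`. -/
def HasDMO {d : ℕ} {F : Type*} [NormedAddCommGroup F] [NormedSpace ℝ F]
    (Ω : Set (Euc d)) (f : Euc d → F) : Prop :=
  IntegrableOn (fun r => meanOsc Ω f r / r) (Set.Ioc (0 : ℝ) 1)

/-- A modulus of continuity: nonnegative, nondecreasing on `(0,∞)`, tending to `0` at `0⁺`. -/
def IsModulus (ρ : ℝ → ℝ) : Prop :=
  (∀ t, 0 ≤ ρ t) ∧ MonotoneOn ρ (Set.Ioi 0) ∧ Tendsto ρ (𝓝[>] 0) (𝓝 0)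

/-- The sup norm `‖g‖_{L^∞(s)}` (for continuous `g`). -/
noncomputable def supNorm {d : ℕ} {F : Type*} [NormedAddCommGroup F]
    (g : Euc d → F) (s : Set (Euc d)) : ℝ :=
  ⨆ x : s, ‖g (x : Euc d)‖

/-- `sup_{x ∈ Ω} ∫_{Ω ∩ B_r(x)} g`. -/
noncomputable def supInt {d : ℕ} (Ω : Set (Euc d)) (g : Euc d → ℝ) (r : ℝ) : ℝ :=
  ⨆ x : Ω, ∫ y in Ω ∩ ball (x : Euc d) r, g y

/-- The Hessian `D²u(x)` of `u` at `x`, as a continuous bilinear form. -/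
noncomputable def hess {d : ℕ} (u : Euc d → ℝ) (x : Euc d) :
    Euc d →L[ℝ] Euc d →L[ℝ] ℝ :=
  fderiv ℝ (fun y => fderiv ℝ u y) x

/-- The Dini sum `ω̃(t) = Σ_{i≥1} κ^{iβ} (ω(κ^{-i}t) if κ^{-i}t ≤ 1, else ω(1))`. -/
noncomputable def diniSum (ω : ℝ → ℝ) (κ β : ℝ) (t : ℝ) : ℝ :=
  ∑' i : ℕ, (κ ^ β) ^ (i + 1) *
    (if t / κ ^ (i + 1) ≤ 1 then ω (t / κ ^ (i + 1)) else ω 1)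

/-- The norm `|𝒮| = sup_{|ξ|=1} |𝒮(ξ,ξ,ξ)|` of a (0,3)-tensor. -/
noncomputable def tnorm {d : ℕ} (S : Euc d →L[ℝ] Euc d →L[ℝ] Euc d →L[ℝ] ℝ) : ℝ :=
  ⨆ ξ : sphere (0 : Euc d) 1, |S ξ.1 ξ.1 ξ.1|

/-- A fully symmetric (0,3)-tensor. -/
def Sym3 {d : ℕ} (S : Euc d →L[ℝ] Euc d →L[ℝ] Euc d →L[ℝ] ℝ) : Prop :=
  ∀ x y z : Euc d, S x y z = S y x z ∧ S x y z = S x z y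

/-- `u` is a weak solution of `div(A Du) + b·Du + c u = f` in `Ω`. -/
def IsWeakSolDiv {d : ℕ} (Ω : Set (Euc d)) (A : Euc d → Euc d →L[ℝ] Euc d)
    (b : Euc d → Euc d) (c f u : Euc d → ℝ) : Prop :=
  ∀ φ : Euc d → ℝ, ContDiff ℝ (⊤ : ℕ∞) φ → HasCompactSupport φ → tsupport φ ⊆ Ω →
    ∫ x in Ω, (⟪b x, gradient u x⟫ + c x * u x - f x) * φ x
      = ∫ x in Ω, ⟪A x (gradient u x), gradient φ x⟫

/-- Hölder continuity with exponent `α` on `s`. -/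
def HolderOnE {d : ℕ} {F : Type*} [NormedAddCommGroup F]
    (g : Euc d → F) (α : ℝ) (s : Set (Euc d)) : Prop :=
  ∃ M : ℝ, ∀ x ∈ s, ∀ y ∈ s, ‖g x - g y‖ ≤ M * ‖x - y‖ ^ α

/-- `v` is the weak gradient of `u` on `s`. -/
def IsWeakGrad {d : ℕ} (s : Set (Euc d)) (u : Euc d → ℝ) (v : Euc d → Euc d) : Prop :=
  ∀ φ : Euc d → ℝ, ContDiff ℝ (⊤ : ℕ∞) φ → HasCompactSupport φ → tsupport φ ⊆ s →
    ∫ x in s, u x • gradient φ x = - ∫ x in s, φ x • v x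

/-- `u ∈ W^{1,p}₀(s)`, with weak gradient `v`: `u, v ∈ L^p`, `v` is the weak gradient of `u`,
and `u` is approximable by smooth compactly supported functions in the `W^{1,p}` norm. -/
def MemW1p0 {d : ℕ} (p : ℝ) (s : Set (Euc d)) (u : Euc d → ℝ) (v : Euc d → Euc d) : Prop :=
  IsWeakGrad s u v ∧
  MemLp u (ENNReal.ofReal p) (volume.restrict s) ∧
  MemLp v (ENNReal.ofReal p) (volume.restrict s) ∧
  ∀ ε : ℝ, 0 < ε → ∃ φ : Euc d → ℝ, ContDiff ℝ (⊤ : ℕ∞) φ ∧ HasCompactSupport φ ∧ tsupport φ ⊆ s ∧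
    eLpNorm (fun x => u x - φ x) (ENNReal.ofReal p) (volume.restrict s) < ENNReal.ofReal ε ∧
    eLpNorm (fun x => v x - gradient φ x) (ENNReal.ofReal p) (volume.restrict s) < ENNReal.ofReal ε

/-- The quantity `φ(r) = (1/r) inf_{l ∈ 𝔄} (⨍_{B_r} |Du - l|^{1/2})²`, the infimum being over
affine maps `l(x) = Sx + p` with `S` symmetric. -/
noncomputable def phiFun {d : ℕ} (u : Euc d → ℝ) (r : ℝ) : ℝ :=
  (1 / r) * ⨅ S : {S : Euc d →L[ℝ] Euc d // ∀ ξ η, ⟪S ξ, η⟫ = ⟪ξ, S η⟫}, ⨅ p : Euc d,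
    (⨍ x in ball (0 : Euc d) r, Real.sqrt ‖gradient u x - S.1 x - p‖) ^ 2

end

/-!
The equation is frozen at `x₀`: with `H = D²u` and `g = f - b·Du - c u`, it reads
`tr (A(x₀) H) = g + tr ((A(x₀) - A) H)`. Averages of `H` over the ellipsoids
`⟪A(x₀)⁻¹ z, z⟫ ≤ t²` depend on the scale `t` only through this quantity: the kernel `φ` and a
potential `χ` satisfy `d φ + z·Dφ = tr (A(x₀) D²χ)`, so the derivative of an average in `t`
integrates by parts to an integral of `tr (A(x₀) H)` against a second derivative of `χ`, which
annihilates affine functions. If `|H| ≤ K |x - x₀|`, then, up to an affine function,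
`tr (A(x₀) H)` is `O((1 + K) t ^ (1 + α))` at scale `t`: the constant `K` comes with an additional
factor `t ^ α`. On a small ball such a bound therefore improves itself to `K ≤ K / 2 + a`. Applied
to the bounds `|H| ≤ K max |x - x₀| ε`, which hold with a finite `K` by compactness, and letting
`ε → 0`, this gives linear growth of `H` at `x₀`. The first derivatives of the averages at `x₀` then
converge as `t → 0` at rate `t ^ α`; their limit is `D³u(x₀)`, and the expansion of `H(x)` follows
from comparing `H(x)` with the average at scale `|x - x₀|`.
-/

section CompactlySupportedIntegrals

variable {E G : Type*} [NormedAddCommGroup E] [MeasurableSpace E]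
  [NormedAddCommGroup G] [NormedSpace ℝ G] {μ : Measure E}

lemma integrable_smul_of_hasCompactSupport [OpensMeasurableSpace E]
    [IsFiniteMeasureOnCompacts μ] {f : E → ℝ} {ψ : E → G} (hf : Continuous f)
    (hψ : Continuous ψ) (hψc : HasCompactSupport ψ) : Integrable (fun z => f z • ψ z) μ :=
  (hf.smul hψ).integrable_of_hasCompactSupport hψc.smul_left

lemma integrable_smulRight_of_hasCompactSupport {P : Type*} [NormedAddCommGroup P]
    [NormedSpace ℝ P] [OpensMeasurableSpace E] [IsFiniteMeasureOnCompacts μ]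
    {f : E → P →L[ℝ] ℝ} {ψ : E → G} (hf : Continuous f) (hψ : Continuous ψ)
    (hψc : HasCompactSupport ψ) : Integrable (fun z => (f z).smulRight (ψ z)) μ :=
  ((ContinuousLinearMap.smulRightL ℝ P G).continuous₂.comp
    (hf.prodMk hψ)).integrable_of_hasCompactSupport (hψc.mono fun z hz h => hz (by simp [h]))

lemma norm_integral_le_mul_volume_closedBall {f : E → G} {x : E} {ρ C : ℝ} [ProperSpace E]
    [IsFiniteMeasureOnCompacts μ]
    (hf₀ : ∀ z ∉ closedBall x ρ, f z = 0) (hf : ∀ z ∈ closedBall x ρ, ‖f z‖ ≤ C) :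
    ‖∫ z, f z ∂μ‖ ≤ C * μ.real (closedBall x ρ) := by
  rw [← setIntegral_eq_integral_of_forall_compl_eq_zero hf₀]
  exact norm_setIntegral_le_of_norm_le_const measure_closedBall_lt_top hf

lemma hasFDerivAt_integral_smul_of_hasCompactSupport {P : Type*} [NormedAddCommGroup P]
    [NormedSpace ℝ P] [ProperSpace P] [OpensMeasurableSpace E] [IsFiniteMeasureOnCompacts μ]
    {f : P → E → ℝ} {f' : P → E → P →L[ℝ] ℝ} {ψ : E → G} (hf : ∀ p, Continuous (f p))
    (hf' : Continuous f'.uncurry) (hff' : ∀ p z, HasFDerivAt (fun p => f p z) (f' p z) p)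
    (hψ : Continuous ψ) (hψc : HasCompactSupport ψ) (p₀ : P) :
    HasFDerivAt (fun p => ∫ z, f p z • ψ z ∂μ) (∫ z, (f' p₀ z).smulRight (ψ z) ∂μ) p₀ := by
  have hF' : Continuous fun q : P × E => (f' q.1 q.2).smulRight (ψ q.2) :=
    (ContinuousLinearMap.smulRightL ℝ P G).continuous₂.comp
      (hf'.prodMk (hψ.comp continuous_snd))
  obtain ⟨M, hM⟩ := ((isCompact_closedBall p₀ 1).prod hψc).exists_bound_of_continuousOn
    hF'.continuousOn
  have hbound : ∀ z, ∀ p ∈ closedBall p₀ 1,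
      ‖(f' p z).smulRight (ψ z)‖ ≤ (tsupport ψ).indicator (fun _ => M) z := by
    intro z p hp
    by_cases hz : z ∈ tsupport ψ
    · simpa only [Set.indicator_of_mem hz] using hM (p, z) ⟨hp, hz⟩
    · simp [hz, image_eq_zero_of_notMem_tsupport hz]
  have hint p := integrable_smul_of_hasCompactSupport (μ := μ) (hf p) hψ hψc
  have hint' := integrable_smulRight_of_hasCompactSupport (μ := μ)
    (hf'.comp (Continuous.prodMk_right p₀)) hψ hψc
  exact hasFDerivAt_integral_of_dominated_of_fderiv_le
    (closedBall_mem_nhds p₀ one_pos) (.of_forall fun p => (hint p).aestronglyMeasurable)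
    (hint p₀) hint'.aestronglyMeasurable
    (.of_forall hbound)
    ((integrable_indicator_iff (isClosed_tsupport ψ).measurableSet).2
      (integrableOn_const hψc.measure_lt_top.ne))
    (.of_forall fun z p _ => (hff' p z).smul_const (ψ z))

end CompactlySupportedIntegrals

section FrechetDerivative

variable {E G : Type*} [NormedAddCommGroup E] [NormedSpace ℝ E]
  [NormedAddCommGroup G] [NormedSpace ℝ G] {f : E → G}

lemma apply_eq_sum_repr_smul {ι : Type*} [Fintype ι] (e : Module.Basis ι ℝ E) (T : E →L[ℝ] G)
    (z : E) : T z = ∑ i, e.repr z i • T (e i) := by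
  conv_lhs => rw [← e.sum_repr z]
  simp only [map_sum, map_smul]

lemma fderiv_fderiv_flip_apply (hf : ContDiff ℝ 2 f) (x a b : E) :
    fderiv ℝ (fun z => fderiv ℝ f z b) x a = fderiv ℝ (fderiv ℝ f) x a b := by
  have hd : DifferentiableAt ℝ (fderiv ℝ f) x :=
    (hf.fderiv_right (m := 1) le_rfl).differentiable one_ne_zero x
  rw [fderiv_clm_apply hd (differentiableAt_const b)]
  simp

lemma fderiv_fderiv_symm (hf : ContDiff ℝ 2 f) (x a b : E) :
    fderiv ℝ (fderiv ℝ f) x a b = fderiv ℝ (fderiv ℝ f) x b a :=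
  hf.contDiffAt.isSymmSndFDerivAt (by simp) a b

end FrechetDerivative

section IntegrationByParts

set_option maxSynthPendingDepth 3

variable {E G : Type*} [NormedAddCommGroup E] [NormedSpace ℝ E] [FiniteDimensional ℝ E]
  [MeasurableSpace E] [BorelSpace E] {μ : Measure E} [μ.IsAddHaarMeasure]
  [NormedAddCommGroup G] [NormedSpace ℝ G] {f : E → ℝ} {ψ : E → G}

lemma integral_smul_fderiv_apply (hf : ContDiff ℝ 1 f) (hψ : ContDiff ℝ 1 ψ)
    (hψc : HasCompactSupport ψ) (a : E) :
    ∫ z, f z • fderiv ℝ ψ z a ∂μ = -∫ z, fderiv ℝ f z a • ψ z ∂μ :=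
  have hf' := (hf.continuous_fderiv one_ne_zero).clm_apply (continuous_const (y := a))
  have hψ' := (hψ.continuous_fderiv one_ne_zero).clm_apply (continuous_const (y := a))
  integral_smul_fderiv_eq_neg_fderiv_smul_of_integrable
    (integrable_smul_of_hasCompactSupport hf' hψ.continuous hψc)
    (integrable_smul_of_hasCompactSupport hf.continuous hψ' (hψc.fderiv_apply ℝ a))
    (integrable_smul_of_hasCompactSupport hf.continuous hψ.continuous hψc)
    (fun z _ => hf.differentiable one_ne_zero z) (fun z _ => hψ.differentiable one_ne_zero z)

lemma integral_smul_fderiv_fderiv_apply (hf : ContDiff ℝ 2 f) (hψ : ContDiff ℝ 2 ψ)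
    (hψc : HasCompactSupport ψ) (a b : E) :
    ∫ z, f z • fderiv ℝ (fderiv ℝ ψ) z a b ∂μ
      = ∫ z, fderiv ℝ (fderiv ℝ f) z a b • ψ z ∂μ := by
  have hψ' : ContDiff ℝ 1 fun z => fderiv ℝ ψ z b :=
    (hψ.fderiv_right (m := 1) le_rfl).clm_apply contDiff_const
  have hf' : ContDiff ℝ 1 fun z => fderiv ℝ f z a :=
    (hf.fderiv_right (m := 1) le_rfl).clm_apply contDiff_const
  calc ∫ z, f z • fderiv ℝ (fderiv ℝ ψ) z a b ∂μ
      = ∫ z, f z • fderiv ℝ (fun z => fderiv ℝ ψ z b) z a ∂μ := by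
        simp only [fderiv_fderiv_flip_apply hψ]
    _ = ∫ z, fderiv ℝ (fun z => fderiv ℝ f z a) z b • ψ z ∂μ := by
        rw [integral_smul_fderiv_apply (hf.of_le one_le_two) hψ' (hψc.fderiv_apply ℝ b),
          integral_smul_fderiv_apply hf' (hψ.of_le one_le_two) hψc, neg_neg]
    _ = ∫ z, fderiv ℝ (fderiv ℝ f) z a b • ψ z ∂μ := by
        simp only [fderiv_fderiv_flip_apply hf, fderiv_fderiv_symm hf _ a b]

lemma integral_fderiv_apply_self_smul (hf : ContDiff ℝ 1 f) (hψ : ContDiff ℝ 1 ψ)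
    (hψc : HasCompactSupport ψ) :
    ∫ z, fderiv ℝ f z z • ψ z ∂μ
      = -∫ z, f z • ((Module.finrank ℝ E : ℝ) • ψ z + fderiv ℝ ψ z z) ∂μ := by
  let e := Module.finBasis ℝ E
  obtain ⟨l, hl⟩ : ∃ l : Fin (Module.finrank ℝ E) → E →L[ℝ] ℝ, ∀ i z, l i z = e.repr z i :=
    ⟨fun i => (e.coord i).toContinuousLinearMap, fun _ _ => rfl⟩
  have hlψ i : ContDiff ℝ 1 fun z => l i z • ψ z := (l i).contDiff.smul hψ
  have hlψc i : HasCompactSupport fun z => l i z • ψ z := hψc.smul_left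
  have hderiv i z : fderiv ℝ (fun z => l i z • ψ z) z (e i)
      = ψ z + l i z • fderiv ℝ ψ z (e i) := by
    rw [fderiv_fun_smul (l i).differentiableAt (hψ.differentiable one_ne_zero z)]
    simp [hl, add_comm]
  have hf' i : Continuous fun z => fderiv ℝ f z (e i) :=
    (hf.continuous_fderiv one_ne_zero).clm_apply continuous_const
  have hlψ' i : Continuous fun z => fderiv ℝ (fun z => l i z • ψ z) z (e i) :=
    ((hlψ i).continuous_fderiv one_ne_zero).clm_apply continuous_const
  calc ∫ z, fderiv ℝ f z z • ψ z ∂μ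
      = ∫ z, ∑ i, fderiv ℝ f z (e i) • l i z • ψ z ∂μ := by
        congr 1 with z
        rw [apply_eq_sum_repr_smul e (fderiv ℝ f z) z, Finset.sum_smul]
        simp only [hl, smul_smul, smul_eq_mul, mul_comm]
    _ = -∑ i, ∫ z, f z • fderiv ℝ (fun z => l i z • ψ z) z (e i) ∂μ := by
        rw [integral_finsetSum _ fun i _ => integrable_smul_of_hasCompactSupport (hf' i)
          (hlψ i).continuous (hlψc i), ← Finset.sum_neg_distrib]
        simp only [integral_smul_fderiv_apply hf (hlψ _) (hlψc _), neg_neg]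
    _ = -∫ z, f z • ((Module.finrank ℝ E : ℝ) • ψ z + fderiv ℝ ψ z z) ∂μ := by
        rw [← integral_finsetSum _ fun i _ => integrable_smul_of_hasCompactSupport hf.continuous
          (hlψ' i) ((hlψc i).fderiv_apply ℝ (e i))]
        congr! 3 with z
        rw [apply_eq_sum_repr_smul e (fderiv ℝ ψ z) z]
        simp only [hderiv]
        simp only [hl, ← Finset.smul_sum, Finset.sum_add_distrib, Finset.sum_const,
          Finset.card_univ, Fintype.card_fin, Nat.cast_smul_eq_nsmul]

lemma integral_affine_smul_fderiv_fderiv (hψ : ContDiff ℝ 2 ψ) (hψc : HasCompactSupport ψ)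
    (c : ℝ) (l : E →L[ℝ] ℝ) :
    ∫ z, (c + l z) • fderiv ℝ (fderiv ℝ ψ) z ∂μ = 0 := by
  have hl : fderiv ℝ (fderiv ℝ fun z => c + l z) = 0 := by
    have : (fderiv ℝ fun z => c + l z) = fun _ => l := by
      ext1 z; rw [fderiv_const_add, l.fderiv]
    rw [this]; exact fderiv_const l
  have hint : Integrable (fun z => (c + l z) • fderiv ℝ (fderiv ℝ ψ) z) μ :=
    integrable_smul_of_hasCompactSupport (by fun_prop)
      ((hψ.fderiv_right (m := 1) le_rfl).continuous_fderiv one_ne_zero)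
      ((hψc.fderiv ℝ).fderiv ℝ)
  ext a b
  rw [ContinuousLinearMap.integral_apply hint,
    ContinuousLinearMap.integral_apply (hint.apply_continuousLinearMap a)]
  have := integral_smul_fderiv_fderiv_apply (μ := μ) (f := fun z => c + l z)
    (by fun_prop) hψ hψc a b
  simpa [hl] using this

end IntegrationByParts

section Scales

lemma tendsto_const_mul_rpow_nhdsGT_zero (c : ℝ) {γ : ℝ} (hγ : 0 < γ) :
    Tendsto (fun r : ℝ => c * r ^ γ) (𝓝[>] 0) (𝓝 0) := by
  have := ((Real.continuous_rpow_const hγ.le).const_mul c).tendsto 0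
  rw [Real.zero_rpow hγ.ne', mul_zero] at this
  exact this.mono_left nhdsWithin_le_nhds

lemma mul_rpow_le_mul_rpow {P t α : ℝ} (hP : 1 ≤ P) (ht : 0 ≤ t) (hα : α ≤ 1) :
    (P * t) ^ α ≤ P * t ^ α := by
  rw [Real.mul_rpow (by positivity) ht]
  gcongr
  exact Real.rpow_le_self_of_one_le hP hα

lemma rpow_mul_le_mul_rpow {s t α : ℝ} (hs : 0 < s) (hst : s ≤ t) (hα : α ≤ 1) :
    t ^ α * s ≤ t * s ^ α := by
  have ht := hs.trans_le hst
  have h : s / t ≤ (s / t) ^ α :=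
    Real.self_le_rpow_of_le_one (by positivity) ((div_le_one ht).2 hst) hα
  rwa [Real.div_rpow hs.le ht.le, div_le_div_iff₀ ht (by positivity), mul_comm, mul_comm _ t] at h

variable {X : Type*} [NormedAddCommGroup X]

lemma norm_sub_le_mul_rpow_sub_rpow_div [NormedSpace ℝ X] {f f' : ℝ → X} {a b D γ : ℝ}
    (ha : 0 < a) (hab : a ≤ b) (hγ : γ ≠ 0) (hf : ∀ s ∈ Set.Icc a b, HasDerivAt f (f' s) s)
    (hf' : ∀ s ∈ Set.Icc a b, ‖f' s‖ ≤ D * s ^ (γ - 1)) :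
    ‖f b - f a‖ ≤ D * ((b ^ γ - a ^ γ) / γ) := by
  have hB : ∀ s ∈ Set.Icc a b,
      HasDerivAt (fun s => D * ((s ^ γ - a ^ γ) / γ)) (D * s ^ (γ - 1)) s := by
    intro s hs
    have := (((Real.hasDerivAt_rpow_const (p := γ) (.inl (ha.trans_le hs.1).ne')).sub_const
      (a ^ γ)).div_const γ).const_mul D
    rwa [mul_div_cancel_left₀ _ hγ] at this
  exact image_norm_le_of_norm_deriv_right_le_deriv_boundary' (f := fun s => f s - f a)
    (fun s hs => ((hf s hs).continuousAt.sub continuousAt_const).continuousWithinAt)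
    (fun s hs => ((hf s (Set.Ico_subset_Icc_self hs)).sub_const (f a)).hasDerivWithinAt)
    (by simp) (fun s hs => (hB s hs).continuousAt.continuousWithinAt)
    (fun s hs => (hB s (Set.Ico_subset_Icc_self hs)).hasDerivWithinAt)
    (fun s hs => hf' s (Set.Ico_subset_Icc_self hs)) ⟨hab, le_rfl⟩

lemma exists_forall_norm_sub_le_of_tendsto_zero [CompleteSpace X] {f : ℝ → X} {ω : ℝ → ℝ} {T : ℝ}
    (hT : 0 < T) (hω : Tendsto ω (𝓝[>] 0) (𝓝 0))
    (hf : ∀ s r, 0 < s → s ≤ r → r ≤ T → ‖f r - f s‖ ≤ ω r) :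
    ∃ L, ∀ r, 0 < r → r ≤ T → ‖f r - L‖ ≤ ω r := by
  have hcauchy : Cauchy (map f (𝓝[>] 0)) := by
    refine Metric.cauchy_iff.2 ⟨inferInstance, fun δ hδ => ?_⟩
    obtain ⟨r, hrδ, hr, hrT⟩ :=
      ((hω.eventually_lt_const (half_pos hδ)).and (Ioc_mem_nhdsGT hT)).exists
    refine ⟨f '' Set.Ioc 0 r, image_mem_map (Ioc_mem_nhdsGT hr), ?_⟩
    rintro _ ⟨s, hs, rfl⟩ _ ⟨s', hs', rfl⟩
    rw [← add_halves δ]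
    refine (dist_triangle_left (f s) (f s') (f r)).trans_lt (add_lt_add ?_ ?_) <;>
      rw [dist_eq_norm]
    · exact (hf s r hs.1 hs.2 hrT).trans_lt hrδ
    · exact (hf s' r hs'.1 hs'.2 hrT).trans_lt hrδ
  obtain ⟨L, hL⟩ := cauchy_map_iff_exists_tendsto.1 hcauchy
  refine ⟨L, fun r hr hrT => le_of_tendsto (tendsto_const_nhds.sub hL).norm ?_⟩
  filter_upwards [Ioc_mem_nhdsGT hr] with s hs
  exact hf s r hs.1 hs.2 hrT

end Scales

section Bootstrap

set_option maxSynthPendingDepth 3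

variable {E X : Type*} [NormedAddCommGroup E] [NormedAddCommGroup X]

/-- Linear growth of `H` away from `x₀`, truncated at distance `ε`, on the closed ball of
radius `R`. The truncation makes the best constant `K` finite, so that it can be absorbed. -/
def TruncatedGrowth (H : E → X) (x₀ : E) (R K ε : ℝ) : Prop :=
  ∀ x, ‖x - x₀‖ ≤ R → ‖H x‖ ≤ K * max ‖x - x₀‖ ε

lemma TruncatedGrowth.norm_le {H : E → X} {x₀ x : E}
    {R K ε τ : ℝ} (hH : TruncatedGrowth H x₀ R K ε) (hK : 0 ≤ K) (hε : ε ≤ τ) (hτ : τ ≤ R)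
    (hx : x ∈ closedBall x₀ τ) : ‖H x‖ ≤ K * τ := by
  rw [mem_closedBall_iff_norm] at hx
  exact (hH x (hx.trans hτ)).trans (by gcongr; exact max_le hx hε)

lemma TruncatedGrowth.norm_apply_add_smul_sub_le [NormedSpace ℝ E] {H : E → X} {x₀ y z : E}
    {R K ε ρ t : ℝ} (hH : TruncatedGrowth H x₀ R K ε) (hK : 0 ≤ K) (ht : 0 ≤ t) (hεt : ε ≤ t)
    (htR : (1 + ρ) * t ≤ R) (hy : ‖y - x₀‖ ≤ t) (hz : z ∈ closedBall 0 ρ) :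
    ‖H (y + t • z) - H y‖ ≤ 2 * (K * ((1 + ρ) * t)) := by
  rw [mem_closedBall_zero_iff] at hz
  have htP : t ≤ (1 + ρ) * t := le_mul_of_one_le_left ht (by linarith [norm_nonneg z])
  have htz : ‖t • z‖ ≤ t * ρ := by
    rw [norm_smul, Real.norm_of_nonneg ht]
    gcongr
  have hyz : y + t • z ∈ closedBall x₀ ((1 + ρ) * t) := by
    rw [mem_closedBall_iff_norm, add_sub_right_comm]
    linarith [norm_add_le (y - x₀) (t • z)]
  rw [two_mul]
  exact norm_sub_le_of_le (hH.norm_le hK (hεt.trans htP) htR hyz)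
    (hH.norm_le hK (hεt.trans htP) htR (mem_closedBall_iff_norm.2 (hy.trans htP)))

lemma TruncatedGrowth.of_forall_improve [ProperSpace E] {H : E → X} {x₀ : E} {R ε a : ℝ}
    (hH : Continuous H) (hR : 0 ≤ R) (hε : 0 < ε)
    (himp : ∀ K, 0 ≤ K → TruncatedGrowth H x₀ R K ε → TruncatedGrowth H x₀ R (K / 2 + a) ε) :
    TruncatedGrowth H x₀ R (2 * a) ε := by
  have hmax x : 0 < max ‖x - x₀‖ ε := lt_max_of_lt_right hε
  obtain ⟨m, hm, hmmax⟩ := (isCompact_closedBall x₀ R).exists_isMaxOn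
    ⟨x₀, mem_closedBall_self hR⟩ (f := fun x => ‖H x‖ / max ‖x - x₀‖ ε)
    (hH.norm.div (by fun_prop) fun x => (hmax x).ne').continuousOn
  set K := ‖H m‖ / max ‖m - x₀‖ ε
  have hK : TruncatedGrowth H x₀ R K ε := fun x hx =>
    (div_le_iff₀ (hmax x)).1 (hmmax (mem_closedBall_iff_norm.2 hx))
  have hK2 : K ≤ K / 2 + a :=
    (div_le_iff₀ (hmax m)).2 (himp K (by positivity) hK m (mem_closedBall_iff_norm.1 hm))
  exact fun x hx => (hK x hx).trans (by gcongr; linarith)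

lemma TruncatedGrowth.of_forall_pos {H : E → X} {x₀ : E} {R K r : ℝ} (hr : 0 < r)
    (hH₀ : H x₀ = 0) (h : ∀ ε, 0 < ε → ε ≤ r → TruncatedGrowth H x₀ R K ε) :
    TruncatedGrowth H x₀ R K 0 := by
  intro x hx
  rw [max_eq_left (norm_nonneg _)]
  rcases eq_or_ne x x₀ with rfl | hne
  · simp [hH₀]
  · have hpos : 0 < ‖x - x₀‖ := norm_pos_iff.2 (sub_ne_zero.2 hne)
    simpa using h (min ‖x - x₀‖ r) (lt_min hpos hr) (min_le_right _ _) x hx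

variable [NormedSpace ℝ E] [NormedSpace ℝ X]

/-- A multiscale approximation of `c₀ • H` near the zero `x₀` of `H`: the averages `W t` at
scale `t`, with derivatives `-J t` and second derivatives `Q t`, are almost independent of the
scale, with errors controlled by the growth constant `K` of `H`. -/
structure MultiscaleApprox (H : E → X) (W : ℝ → E → X) (J : ℝ → E → E →L[ℝ] X)
    (Q : ℝ → E → E →L[ℝ] E →L[ℝ] X) (x₀ : E) (c₀ C α T R : ℝ) : Prop where
  c₀_pos : 0 < c₀
  C_nonneg : 0 ≤ C
  exponent_mem : α ∈ Set.Ioo (0 : ℝ) 1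
  T_pos : 0 < T
  T_le : T ≤ R
  continuous : Continuous H
  apply_center : H x₀ = 0
  hasFDerivAt_average : ∀ t y, 0 < t → HasFDerivAt (W t) (-J t y) y
  hasFDerivAt_deriv : ∀ t y, 0 < t → HasFDerivAt (J t) (-Q t y) y
  continuous_second : ∀ t, 0 < t → Continuous (Q t)
  average_sub_le : ∀ K ε, 0 ≤ K → 0 ≤ ε → TruncatedGrowth H x₀ R K ε →
    ∀ t y, 0 < t → ε ≤ t → t ≤ T → ‖y - x₀‖ ≤ t →
      ‖W t y - c₀ • H y‖ ≤ C * (1 + K) * t ^ (1 + α)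
  deriv_sub_le : ∀ K ε, 0 ≤ K → 0 ≤ ε → TruncatedGrowth H x₀ R K ε →
    ∀ s r y, 0 < s → ε ≤ s → s ≤ r → r ≤ T → ‖y - x₀‖ ≤ s →
      ‖J r y - J s y‖ ≤ C * (1 + K) * r ^ α
  second_sub_le : ∀ K ε, 0 ≤ K → 0 ≤ ε → TruncatedGrowth H x₀ R K ε →
    ∀ s r y, 0 < s → ε ≤ s → s ≤ r → r ≤ T → ‖y - x₀‖ ≤ s →
      ‖Q r y - Q s y‖ ≤ C * (1 + K) * s ^ (α - 1)

namespace MultiscaleApprox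

variable {H : E → X} {W : ℝ → E → X} {J : ℝ → E → E →L[ℝ] X}
  {Q : ℝ → E → E →L[ℝ] E →L[ℝ] X} {x₀ : E} {c₀ C α T R : ℝ}

lemma norm_average_center_le (h : MultiscaleApprox H W J Q x₀ c₀ C α T R) {K ε t : ℝ}
    (hK : 0 ≤ K) (hε : 0 ≤ ε) (hgrowth : TruncatedGrowth H x₀ R K ε) (ht : 0 < t)
    (hεt : ε ≤ t) (htT : t ≤ T) : ‖W t x₀‖ ≤ C * (1 + K) * t ^ (1 + α) := by
  simpa [h.apply_center] using
    h.average_sub_le K ε hK hε hgrowth t x₀ ht hεt htT (by simpa using ht.le)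

lemma smul_norm_le (h : MultiscaleApprox H W J Q x₀ c₀ C α T R) {K ε r B : ℝ} (hK : 0 ≤ K)
    (hε : 0 < ε) (hgrowth : TruncatedGrowth H x₀ R K ε) (hεr : ε ≤ r) (hrT : r ≤ T)
    (hB : ∀ y ∈ closedBall x₀ r, ‖J r y‖ ≤ B) {x : E} (hx : ‖x - x₀‖ ≤ r) :
    c₀ * ‖H x‖ ≤ (B + (1 + K) * (3 * C * r ^ α)) * max ‖x - x₀‖ ε := by
  have hC := h.C_nonneg
  have hα := h.exponent_mem.1.le
  set t := max ‖x - x₀‖ ε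
  have ht : 0 < t := lt_max_of_lt_right hε
  have hεt : ε ≤ t := le_max_right _ _
  have htr : t ≤ r := max_le hx hεr
  have hJ : ∀ y ∈ closedBall x₀ t, ‖-J t y‖ ≤ B + C * (1 + K) * r ^ α := by
    intro y hy
    have hJrt := h.deriv_sub_le K ε hK hε.le hgrowth t r y ht hεt htr hrT
      (mem_closedBall_iff_norm.1 hy)
    have := norm_le_norm_add_norm_sub (J r y) (J t y)
    have := hB y (closedBall_subset_closedBall htr hy)
    rw [norm_neg]
    linarith
  have hB₀ : 0 ≤ B + C * (1 + K) * r ^ α :=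
    (norm_nonneg _).trans (hJ x₀ (mem_closedBall_self ht.le))
  have hosc : ‖W t x - W t x₀‖ ≤ (B + C * (1 + K) * r ^ α) * t := calc
    _ ≤ (B + C * (1 + K) * r ^ α) * ‖x - x₀‖ :=
      (convex_closedBall x₀ t).norm_image_sub_le_of_norm_hasFDerivWithin_le
        (fun y _ => (h.hasFDerivAt_average t y ht).hasFDerivWithinAt) hJ
        (mem_closedBall_self ht.le) (mem_closedBall_iff_norm.2 (le_max_left _ _))
    _ ≤ _ := by gcongr; exact le_max_left _ _
  have happrox := h.average_sub_le K ε hK hε.le hgrowth t x ht hεt (htr.trans hrT)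
    (le_max_left _ _)
  have hcenter := h.norm_average_center_le hK hε.le hgrowth ht hεt (htr.trans hrT)
  have hpow : C * (1 + K) * t ^ (1 + α) ≤ C * (1 + K) * (t * r ^ α) := by
    rw [Real.rpow_add ht, Real.rpow_one]
    gcongr
  calc c₀ * ‖H x‖ = ‖c₀ • H x‖ := by
        rw [norm_smul, Real.norm_of_nonneg h.c₀_pos.le]
    _ = ‖-(W t x - c₀ • H x) + (W t x - W t x₀) + W t x₀‖ := by congr 1; abel
    _ ≤ ‖W t x - c₀ • H x‖ + ‖W t x - W t x₀‖ + ‖W t x₀‖ := by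
        simpa only [norm_neg] using norm_add₃_le (a := -(W t x - c₀ • H x))
    _ ≤ (B + (1 + K) * (3 * C * r ^ α)) * t := by linarith

variable [ProperSpace E]

lemma exists_truncatedGrowth_zero (h : MultiscaleApprox H W J Q x₀ c₀ C α T R) :
    ∃ K, 0 ≤ K ∧ TruncatedGrowth H x₀ R K 0 := by
  have hc₀ := h.c₀_pos
  have hR : 0 ≤ R := h.T_pos.le.trans h.T_le
  obtain ⟨r, hrC, hr, hrT⟩ : ∃ r : ℝ, 3 * C * r ^ α ≤ c₀ / 2 ∧ r ∈ Set.Ioc 0 T := by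
    have hlim := tendsto_const_mul_rpow_nhdsGT_zero (3 * C) h.exponent_mem.1
    exact ((hlim.eventually_le_const (half_pos hc₀)).and (Ioc_mem_nhdsGT h.T_pos)).exists
  have hJcont : Continuous (J r) :=
    continuous_iff_continuousAt.2 fun y => (h.hasFDerivAt_deriv r y hr).continuousAt
  obtain ⟨B, hB⟩ := (isCompact_closedBall x₀ r).exists_bound_of_continuousOn hJcont.continuousOn
  obtain ⟨S, hS⟩ := (isCompact_closedBall x₀ R).exists_bound_of_continuousOn
    h.continuous.continuousOn
  have hB₀ : 0 ≤ B := (norm_nonneg _).trans (hB x₀ (mem_closedBall_self hr.le))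
  have hS₀ : 0 ≤ S := (norm_nonneg _).trans (hS x₀ (mem_closedBall_self hR))
  refine ⟨2 * (B / c₀ + 1 / 2 + S / r), by positivity, .of_forall_pos hr h.apply_center
    fun ε hε hεr => .of_forall_improve h.continuous hR hε fun K hK hgrowth x hx => ?_⟩
  rcases le_or_gt ‖x - x₀‖ r with hxr | hxr
  · have hmain := h.smul_norm_le hK hε hgrowth hεr hrT hB hxr
    have hcoef : B + (1 + K) * (3 * C * r ^ α) ≤ c₀ * (K / 2 + (B / c₀ + 1 / 2)) := calc
      _ ≤ B + (1 + K) * (c₀ / 2) := by gcongr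
      _ = c₀ * (K / 2 + (B / c₀ + 1 / 2)) := by field_simp; ring
    refine le_of_mul_le_mul_left (hmain.trans ?_) hc₀
    rw [← mul_assoc c₀]
    refine mul_le_mul_of_nonneg_right (hcoef.trans ?_) (hε.le.trans (le_max_right _ _))
    have hSr : 0 ≤ S / r := by positivity
    exact mul_le_mul_of_nonneg_left (by linarith) hc₀.le
  · calc ‖H x‖ ≤ S := hS x (mem_closedBall_iff_norm.2 hx)
      _ = S / r * r := (div_mul_cancel₀ S hr.ne').symm
      _ ≤ (K / 2 + (B / c₀ + 1 / 2 + S / r)) * max ‖x - x₀‖ ε := by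
        gcongr
        · exact le_add_of_nonneg_of_le (by positivity) (le_add_of_nonneg_left (by positivity))
        · exact hxr.le.trans (le_max_left _ _)

lemma exists_norm_second_le (h : MultiscaleApprox H W J Q x₀ c₀ C α T R) :
    ∃ D, 0 ≤ D ∧ ∀ t y, 0 < t → t ≤ T → ‖y - x₀‖ ≤ t → ‖Q t y‖ ≤ D * t ^ (α - 1) := by
  obtain ⟨K, hK, hgrowth⟩ := h.exists_truncatedGrowth_zero
  have hT := h.T_pos
  obtain ⟨B, hB⟩ := (isCompact_closedBall x₀ T).exists_bound_of_continuousOn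
    (h.continuous_second T hT).continuousOn
  have hB₀ : 0 ≤ B := (norm_nonneg _).trans (hB x₀ (mem_closedBall_self hT.le))
  have hC := h.C_nonneg
  refine ⟨B / T ^ (α - 1) + C * (1 + K), by positivity, fun t y ht htT hy => ?_⟩
  have hQ := h.second_sub_le K 0 hK le_rfl hgrowth t T y ht ht.le htT le_rfl hy
  have hBT := hB y (mem_closedBall_iff_norm.2 (hy.trans htT))
  have hpow : T ^ (α - 1) ≤ t ^ (α - 1) :=
    Real.rpow_le_rpow_of_nonpos ht htT (by linarith [h.exponent_mem.2])
  calc ‖Q t y‖ ≤ ‖Q T y‖ + ‖Q T y - Q t y‖ := norm_le_norm_add_norm_sub _ _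
    _ ≤ B / T ^ (α - 1) * T ^ (α - 1) + C * (1 + K) * t ^ (α - 1) := by
      rw [div_mul_cancel₀ B (by positivity)]; gcongr
    _ ≤ (B / T ^ (α - 1) + C * (1 + K)) * t ^ (α - 1) := by
      rw [add_mul]; gcongr

lemma exists_norm_deriv_sub_le [CompleteSpace X] (h : MultiscaleApprox H W J Q x₀ c₀ C α T R) :
    ∃ (L : E →L[ℝ] X) (D : ℝ),
      ∀ t y, 0 < t → t ≤ T → ‖y - x₀‖ ≤ t → ‖J t y - L‖ ≤ D * t ^ α := by
  obtain ⟨K, hK, hgrowth⟩ := h.exists_truncatedGrowth_zero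
  obtain ⟨D, hD, hQ⟩ := h.exists_norm_second_le
  obtain ⟨L, hL⟩ := exists_forall_norm_sub_le_of_tendsto_zero (f := fun t => J t x₀) h.T_pos
    (tendsto_const_mul_rpow_nhdsGT_zero (C * (1 + K)) h.exponent_mem.1)
    fun s r hs hsr hrT => h.deriv_sub_le K 0 hK le_rfl hgrowth s r x₀ hs hs.le hsr hrT
      (by simpa using hs.le)
  refine ⟨L, D + C * (1 + K), fun t y ht htT hy => ?_⟩
  have hosc : ‖J t y - J t x₀‖ ≤ D * t ^ (α - 1) * ‖y - x₀‖ :=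
    (convex_closedBall x₀ t).norm_image_sub_le_of_norm_hasFDerivWithin_le
      (fun z _ => (h.hasFDerivAt_deriv t z ht).hasFDerivWithinAt)
      (fun z hz => by
        rw [norm_neg]; exact hQ t z ht htT (mem_closedBall_iff_norm.1 hz))
      (mem_closedBall_self ht.le) (mem_closedBall_iff_norm.2 hy)
  have hpow : t ^ (α - 1) * t = t ^ α := by
    rw [← Real.rpow_add_one ht.ne', sub_add_cancel]
  calc ‖J t y - L‖ ≤ ‖J t y - J t x₀‖ + ‖J t x₀ - L‖ := norm_sub_le_norm_sub_add_norm_sub _ _ _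
    _ ≤ D * t ^ (α - 1) * t + C * (1 + K) * t ^ α := by
      gcongr
      · exact hosc.trans (by gcongr)
      · exact hL t ht htT
    _ = (D + C * (1 + K)) * t ^ α := by rw [mul_assoc, hpow, add_mul]

theorem exists_isBigO_sub [CompleteSpace X] (h : MultiscaleApprox H W J Q x₀ c₀ C α T R) :
    ∃ S : E →L[ℝ] X,
      (fun y => H y - S (y - x₀)) =O[𝓝 x₀] fun y => ‖y - x₀‖ ^ (1 + α) := by
  obtain ⟨K, hK, hgrowth⟩ := h.exists_truncatedGrowth_zero
  obtain ⟨L, D, hL⟩ := h.exists_norm_deriv_sub_le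
  have hc₀ := h.c₀_pos
  refine ⟨-(c₀⁻¹ • L), .of_bound (c₀⁻¹ * (D + 2 * (C * (1 + K)))) ?_⟩
  filter_upwards [closedBall_mem_nhds x₀ h.T_pos] with y hyT
  rcases eq_or_ne y x₀ with rfl | hne
  · simp [h.apply_center, Real.zero_rpow (by linarith [h.exponent_mem.1] : 1 + α ≠ 0)]
  have ht : 0 < ‖y - x₀‖ := norm_pos_iff.2 (sub_ne_zero.2 hne)
  set t := ‖y - x₀‖
  have htT : t ≤ T := mem_closedBall_iff_norm.1 hyT
  have hW : ‖W t y - W t x₀ + L (y - x₀)‖ ≤ D * t ^ (1 + α) := calc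
    _ = ‖W t y - W t x₀ - (-L) (y - x₀)‖ := by rw [neg_apply, sub_neg_eq_add]
    _ ≤ D * t ^ α * ‖y - x₀‖ :=
      (convex_closedBall x₀ t).norm_image_sub_le_of_norm_hasFDerivWithin_le'
        (fun z _ => (h.hasFDerivAt_average t z ht).hasFDerivWithinAt)
        (fun z hz => by
          rw [neg_sub_neg, norm_sub_rev]; exact hL t z ht htT (mem_closedBall_iff_norm.1 hz))
        (mem_closedBall_self ht.le) (mem_closedBall_iff_norm.2 le_rfl)
    _ = D * t ^ (1 + α) := by rw [Real.rpow_add ht, Real.rpow_one]; ring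
  have happrox := h.average_sub_le K 0 hK le_rfl hgrowth t y ht ht.le htT le_rfl
  have hcenter := h.norm_average_center_le hK le_rfl hgrowth ht ht.le htT
  have hsplit : H y - (-(c₀⁻¹ • L)) (y - x₀)
      = c₀⁻¹ • (-(W t y - c₀ • H y) + (W t y - W t x₀ + L (y - x₀)) + W t x₀) := by
    have : -(W t y - c₀ • H y) + (W t y - W t x₀ + L (y - x₀)) + W t x₀
        = c₀ • H y + L (y - x₀) := by abel
    rw [this, smul_add, inv_smul_smul₀ hc₀.ne']
    simp
  rw [hsplit, norm_smul, Real.norm_of_nonneg (by positivity : 0 ≤ c₀⁻¹),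
    Real.norm_of_nonneg (by positivity : 0 ≤ t ^ (1 + α)), mul_assoc]
  gcongr
  refine norm_add₃_le.trans ?_
  rw [norm_neg]
  linarith

end MultiscaleApprox

end Bootstrap

section ThirdDerivative

variable {E G : Type*} [NormedAddCommGroup E] [NormedSpace ℝ E]
  [NormedAddCommGroup G] [NormedSpace ℝ G] {f : E → G}

lemma fderiv_fderiv_fderiv_rotate (hf : ContDiff ℝ 3 f) (x v a b : E) :
    fderiv ℝ (fderiv ℝ (fderiv ℝ f)) x v a b = fderiv ℝ (fderiv ℝ (fderiv ℝ f)) x a b v := by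
  have hf' : ContDiff ℝ 2 (fderiv ℝ f) := hf.fderiv_right (m := 2) le_rfl
  have hf'' : DifferentiableAt ℝ (fderiv ℝ (fderiv ℝ f)) x :=
    (hf'.fderiv_right (m := 1) le_rfl).differentiable one_ne_zero x
  have hcoord p q : fderiv ℝ (fun z => fderiv ℝ (fderiv ℝ f) z p q) x a
      = fderiv ℝ (fderiv ℝ (fderiv ℝ f)) x a p q := by
    rw [fderiv_clm_apply (hf''.clm_apply (differentiableAt_const p)) (differentiableAt_const q),
      fderiv_clm_apply hf'' (differentiableAt_const p)]
    simp
  rw [fderiv_fderiv_symm hf' x v a, ← hcoord v b, ← hcoord b v]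
  simp only [fderiv_fderiv_symm (hf.of_le (by norm_num)) _ v b]

end ThirdDerivative

section AffineRescaling

variable {E G : Type*} [NormedAddCommGroup E] [NormedSpace ℝ E]
  [NormedAddCommGroup G] [NormedSpace ℝ G] (f : E → G) (y : E) (s : ℝ)

lemma fderiv_comp_add_smul :
    fderiv ℝ (fun z => f (y + s • z)) = fun z => s • fderiv ℝ f (y + s • z) := by
  ext1 z
  rw [fderiv_comp_smul (f := fun x => f (y + x)), fderiv_comp_add_left]

lemma fderiv_fderiv_comp_add_smul (z : E) :
    fderiv ℝ (fderiv ℝ fun z => f (y + s • z)) z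
      = s ^ 2 • fderiv ℝ (fderiv ℝ f) (y + s • z) := by
  rw [fderiv_comp_add_smul]
  refine (congrFun (fderiv_const_smul_field (f := fun z => fderiv ℝ f (y + s • z)) s) z).trans ?_
  rw [Pi.smul_apply, fderiv_comp_add_smul, smul_smul, sq]

end AffineRescaling

section Trace

variable {ι E G : Type*} [Fintype ι] [NormedAddCommGroup E] [InnerProductSpace ℝ E]
  [NormedAddCommGroup G] [NormedSpace ℝ G]

/-- The trace `tr (A T)` of a vector-valued bilinear form `T` against an endomorphism `A`,
computed in an orthonormal basis `e`, as a continuous linear map of `T`. -/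
noncomputable def traceForm (e : OrthonormalBasis ι ℝ E) (A : E →L[ℝ] E) :
    (E →L[ℝ] E →L[ℝ] G) →L[ℝ] G :=
  ∑ i, (ContinuousLinearMap.apply ℝ G (e i)).comp
    (ContinuousLinearMap.apply ℝ (E →L[ℝ] G) (A (e i)))

variable (e : OrthonormalBasis ι ℝ E) (A : E →L[ℝ] E) (T : E →L[ℝ] E →L[ℝ] G)

lemma traceForm_apply : traceForm e A T = ∑ i, T (A (e i)) (e i) := by
  simp [traceForm]

lemma norm_traceForm_apply_le : ‖traceForm e A T‖ ≤ Fintype.card ι * (‖T‖ * ‖A‖) := by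
  rw [traceForm_apply]
  refine (norm_sum_le_of_le (n := fun _ => ‖T‖ * ‖A‖) _ fun i _ => ?_).trans_eq (by simp)
  simpa using T.le_of_opNorm₂_le_of_le le_rfl (A.le_opNorm (e i)) (e.norm_eq_one i).le

lemma traceForm_sub_traceForm_apply (A' : E →L[ℝ] E) :
    traceForm e A T - traceForm e A' T = traceForm e (A - A') T := by
  simp [traceForm_apply]

lemma traceForm_fderiv_fderiv_fderiv_apply {χ : E → G} (hχ : ContDiff ℝ 3 χ) (z v : E) :
    traceForm e A (fderiv ℝ (fderiv ℝ (fderiv ℝ χ)) z) v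
      = traceForm e A (fderiv ℝ (fderiv ℝ (fderiv ℝ χ)) z v) := by
  simp only [traceForm_apply, sum_apply, fderiv_fderiv_fderiv_rotate hχ z v]

variable [MeasurableSpace E] [BorelSpace E] {μ : Measure E} [μ.IsAddHaarMeasure]

lemma integral_smul_traceForm_fderiv_fderiv {f : E → ℝ} {ψ : E → G} (hf : ContDiff ℝ 2 f)
    (hψ : ContDiff ℝ 2 ψ) (hψc : HasCompactSupport ψ) :
    ∫ z, f z • traceForm e A (fderiv ℝ (fderiv ℝ ψ) z) ∂μ
      = ∫ z, traceForm e A (fderiv ℝ (fderiv ℝ f) z) • ψ z ∂μ := by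
  have : FiniteDimensional ℝ E := e.toBasis.finiteDimensional_of_finite
  have hf' : Continuous (fderiv ℝ (fderiv ℝ f)) :=
    (hf.fderiv_right (m := 1) le_rfl).continuous_fderiv one_ne_zero
  have hψ' : Continuous (fderiv ℝ (fderiv ℝ ψ)) :=
    (hψ.fderiv_right (m := 1) le_rfl).continuous_fderiv one_ne_zero
  have hψ'c a b : HasCompactSupport fun z => fderiv ℝ (fderiv ℝ ψ) z a b :=
    ((hψc.fderiv ℝ).fderiv ℝ).comp_left (g := fun T : E →L[ℝ] E →L[ℝ] G => T a b) rfl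
  simp only [traceForm_apply, Finset.smul_sum, Finset.sum_smul]
  rw [integral_finsetSum _ fun i _ => integrable_smul_of_hasCompactSupport hf.continuous
      (by fun_prop) (hψ'c _ _),
    integral_finsetSum _ fun i _ => integrable_smul_of_hasCompactSupport (by fun_prop)
      hψ.continuous hψc]
  simp only [integral_smul_fderiv_fderiv_apply hf hψ hψc]

end Trace

section KernelPairs

set_option maxSynthPendingDepth 3

open scoped ContDiff

variable {ι E G : Type*} [Fintype ι] [NormedAddCommGroup E] [InnerProductSpace ℝ E]
  [NormedAddCommGroup G] [NormedSpace ℝ G]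

/-- A pair of test functions supported in the closed ball of radius `ρ` and tied by
`(k + d) φ + z · Dφ = tr (A D²χ)`. Averages of `w` against `φ`, rescaled by `s ^ (-k)`, then
depend on the scale `s` only through `tr (A D²w)`. -/
structure KernelPair (e : OrthonormalBasis ι ℝ E) (A : E →L[ℝ] E) (k : ℕ) (ρ : ℝ)
    (φ χ : E → G) : Prop where
  contDiff_kernel : ContDiff ℝ ∞ φ
  contDiff_potential : ContDiff ℝ ∞ χ
  tsupport_kernel : tsupport φ ⊆ closedBall 0 ρ
  tsupport_potential : tsupport χ ⊆ closedBall 0 ρ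
  homogeneity : ∀ z, ((k : ℝ) + Module.finrank ℝ E) • φ z + fderiv ℝ φ z z
    = traceForm e A (fderiv ℝ (fderiv ℝ χ) z)

variable {e : OrthonormalBasis ι ℝ E} {A : E →L[ℝ] E} {k : ℕ} {ρ : ℝ} {φ χ : E → G}

lemma KernelPair.succ (h : KernelPair e A k ρ φ χ) :
    KernelPair e A (k + 1) ρ (fderiv ℝ φ) (fderiv ℝ χ) where
  contDiff_kernel := h.contDiff_kernel.fderiv_right le_rfl
  contDiff_potential := h.contDiff_potential.fderiv_right le_rfl
  tsupport_kernel := (tsupport_fderiv_subset ℝ).trans h.tsupport_kernel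
  tsupport_potential := (tsupport_fderiv_subset ℝ).trans h.tsupport_potential
  homogeneity z := by
    have hφ : ContDiff ℝ 2 φ := contDiff_infty.1 h.contDiff_kernel 2
    have hχ : ContDiff ℝ 3 χ := contDiff_infty.1 h.contDiff_potential 3
    have hφ' := hφ.differentiable two_ne_zero z
    have hφ'' := (hφ.fderiv_right (m := 1) le_rfl).differentiable one_ne_zero z
    have hχ'' : DifferentiableAt ℝ (fderiv ℝ (fderiv ℝ χ)) z :=
      ((hχ.fderiv_right (m := 2) le_rfl).fderiv_right (m := 1) le_rfl).differentiable
        one_ne_zero z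
    have hleft := (hφ'.hasFDerivAt.const_smul ((k : ℝ) + Module.finrank ℝ E)).fun_add
      (hφ''.hasFDerivAt.clm_apply (hasFDerivAt_id z))
    have hright := (traceForm e A (G := G)).hasFDerivAt.comp z hχ''.hasFDerivAt
    have hderiv := (hleft.congr_of_eventuallyEq (.of_forall fun z => (h.homogeneity z).symm)).unique
      hright
    ext v
    have hv := congr($hderiv v)
    simp only [add_apply, smul_apply, ContinuousLinearMap.comp_apply, ContinuousLinearMap.id_apply,
      ContinuousLinearMap.flip_apply, id] at hv
    rw [traceForm_fderiv_fderiv_fderiv_apply e A hχ, ← hv, add_apply, smul_apply,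
      fderiv_fderiv_symm hφ z z v]
    push_cast
    module

lemma KernelPair.hasCompactSupport_kernel (h : KernelPair e A k ρ φ χ) : HasCompactSupport φ :=
  have := e.toBasis.finiteDimensional_of_finite
  (isCompact_closedBall 0 ρ).of_isClosed_subset (isClosed_tsupport φ) h.tsupport_kernel

lemma KernelPair.hasCompactSupport_potential (h : KernelPair e A k ρ φ χ) :
    HasCompactSupport χ :=
  have := e.toBasis.finiteDimensional_of_finite
  (isCompact_closedBall 0 ρ).of_isClosed_subset (isClosed_tsupport χ) h.tsupport_potential

variable [MeasurableSpace E] [BorelSpace E] {μ : Measure E} [μ.IsAddHaarMeasure] {w : E → ℝ}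

lemma KernelPair.integral_fderiv_apply_self_smul (h : KernelPair e A k ρ φ χ)
    (hw : ContDiff ℝ 2 w) :
    ∫ z, fderiv ℝ w z z • φ z ∂μ = (k : ℝ) • ∫ z, w z • φ z ∂μ
      - ∫ z, traceForm e A (fderiv ℝ (fderiv ℝ w) z) • χ z ∂μ := by
  have : FiniteDimensional ℝ E := e.toBasis.finiteDimensional_of_finite
  have hφ : ContDiff ℝ 1 φ := contDiff_infty.1 h.contDiff_kernel 1
  have hχ : ContDiff ℝ 2 χ := contDiff_infty.1 h.contDiff_potential 2
  have hD : Continuous fun z => traceForm e A (fderiv ℝ (fderiv ℝ χ) z) :=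
    (traceForm e A).continuous.comp
      ((hχ.fderiv_right (m := 1) le_rfl).continuous_fderiv one_ne_zero)
  have hDc : HasCompactSupport fun z => traceForm e A (fderiv ℝ (fderiv ℝ χ) z) :=
    ((h.hasCompactSupport_potential.fderiv ℝ).fderiv ℝ).comp_left (map_zero _)
  rw [_root_.integral_fderiv_apply_self_smul (hw.of_le one_le_two) hφ h.hasCompactSupport_kernel,
    ← integral_smul_traceForm_fderiv_fderiv e A hw hχ h.hasCompactSupport_potential,
    ← integral_smul, ← integral_neg]
  refine Eq.trans ?_ (integral_sub ((integrable_smul_of_hasCompactSupport hw.continuous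
    hφ.continuous h.hasCompactSupport_kernel).smul _)
    (integrable_smul_of_hasCompactSupport hw.continuous hD hDc))
  congr 1 with z
  rw [← h.homogeneity z]
  module

end KernelPairs

section ScaledAverages

set_option maxSynthPendingDepth 3

variable {E G : Type*} [NormedAddCommGroup E] [InnerProductSpace ℝ E] [FiniteDimensional ℝ E]
  [MeasurableSpace E] [BorelSpace E] [NormedAddCommGroup G] [NormedSpace ℝ G]

/-- The average of `u` at scale `t` around `y` against the kernel `Φ`, normalised by `t ^ (-k)` so
that `k`-th derivatives of a fixed kernel yield averages of `D^k u`. -/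
noncomputable def scaledAverage (u : E → ℝ) (Φ : E → G) (k : ℕ) (t : ℝ) (y : E) : G :=
  (t ^ k)⁻¹ • ∫ z, u (y + t • z) • Φ z

variable {u : E → ℝ} {Φ : E → G} {k : ℕ} {t : ℝ}

lemma hasFDerivAt_scaledAverage (hu : ContDiff ℝ 1 u) (hΦ : ContDiff ℝ 1 Φ)
    (hΦc : HasCompactSupport Φ) (ht : t ≠ 0) (y : E) :
    HasFDerivAt (scaledAverage u Φ k t) (-scaledAverage u (fderiv ℝ Φ) (k + 1) t y) y := by
  have hu' : Continuous (fderiv ℝ u) := hu.continuous_fderiv one_ne_zero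
  have hint := (hasFDerivAt_integral_smul_of_hasCompactSupport (μ := volume)
    (f := fun y z => u (y + t • z)) (f' := fun y z => fderiv ℝ u (y + t • z))
    (fun y => hu.continuous.comp (by fun_prop)) (hu'.comp (by fun_prop))
    (fun y z => (hasFDerivAt_comp_add_right _).2 (hu.differentiable one_ne_zero _).hasFDerivAt)
    hΦ.continuous hΦc y).const_smul (t ^ k)⁻¹
  refine hint.congr_fderiv ?_
  ext v
  have hv := integral_smul_fderiv_apply (μ := volume) (f := fun z => u (y + t • z))
    (hu.comp (by fun_prop)) hΦ hΦc v
  have hcont : Continuous fun z => u (y + t • z) := hu.continuous.comp (by fun_prop)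
  have hcont' : Continuous fun z => fderiv ℝ u (y + t • z) := hu'.comp (by fun_prop)
  simp only [fderiv_comp_add_smul, smul_apply, smul_assoc, integral_smul] at hv
  rw [smul_apply, neg_apply, scaledAverage, smul_apply, pow_succ,
    ContinuousLinearMap.integral_apply (integrable_smul_of_hasCompactSupport hcont
      (hΦ.continuous_fderiv one_ne_zero) (hΦc.fderiv ℝ)),
    ContinuousLinearMap.integral_apply
      (integrable_smulRight_of_hasCompactSupport hcont' hΦ.continuous hΦc)]
  simp only [smul_apply, ContinuousLinearMap.smulRight_apply, hv, mul_inv, mul_smul, smul_neg,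
    neg_neg, inv_smul_smul₀ ht]

lemma continuous_scaledAverage (hu : ContDiff ℝ 1 u) (hΦ : ContDiff ℝ 1 Φ)
    (hΦc : HasCompactSupport Φ) (ht : t ≠ 0) : Continuous (scaledAverage u Φ k t) :=
  continuous_iff_continuousAt.2 fun y => (hasFDerivAt_scaledAverage hu hΦ hΦc ht y).continuousAt

lemma hasDerivAt_integral_comp_add_smul (hu : ContDiff ℝ 1 u) (hΦ : Continuous Φ)
    (hΦc : HasCompactSupport Φ) (y : E) (t : ℝ) :
    HasDerivAt (fun t => ∫ z, u (y + t • z) • Φ z)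
      (∫ z, fderiv ℝ u (y + t • z) z • Φ z) t := by
  have hu' : Continuous (fderiv ℝ u) := hu.continuous_fderiv one_ne_zero
  have hline : Continuous (Function.uncurry fun (t : ℝ) z =>
      ContinuousLinearMap.toSpanSingleton ℝ (fderiv ℝ u (y + t • z) z)) :=
    (ContinuousLinearMap.toSpanSingletonCLE (𝕜 := ℝ) (E := ℝ)).continuous.comp (by fun_prop)
  have hint := (hasFDerivAt_integral_smul_of_hasCompactSupport (μ := volume)
    (f := fun t z => u (y + t • z))
    (fun t => hu.continuous.comp (by fun_prop)) hline
    (fun t z => ((hu.differentiable one_ne_zero _).hasFDerivAt.comp_hasDerivAt t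
      (by simpa using ((hasDerivAt_id t).smul_const z).const_add y)).hasFDerivAt)
    hΦ hΦc t).hasDerivAt
  simpa [ContinuousLinearMap.integral_apply (integrable_smulRight_of_hasCompactSupport
    (hline.uncurry_left t) hΦ hΦc)] using hint

lemma KernelPair.hasDerivAt_scaledAverage {ι : Type*} [Fintype ι] {e : OrthonormalBasis ι ℝ E}
    {A : E →L[ℝ] E} {ρ : ℝ} {φ χ : E → G} (h : KernelPair e A k ρ φ χ) (hu : ContDiff ℝ 2 u)
    (y : E) (ht : 0 < t) :
    HasDerivAt (fun t => scaledAverage u φ k t y)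
      (-((t ^ k)⁻¹ * t) • ∫ z, traceForm e A (fderiv ℝ (fderiv ℝ u) (y + t • z)) • χ z) t := by
  have hibp := h.integral_fderiv_apply_self_smul (μ := volume) (w := fun z => u (y + t • z))
    (hu.comp (by fun_prop))
  simp_rw [fderiv_fderiv_comp_add_smul] at hibp
  simp only [fderiv_comp_add_smul, map_smul, smul_apply, smul_assoc, integral_smul] at hibp
  have hpow : HasDerivAt (fun t : ℝ => (t ^ k)⁻¹) (-(k * (t ^ k)⁻¹ * t⁻¹)) t := by
    have hz := hasDerivAt_zpow (-(k : ℤ)) t (.inl ht.ne')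
    simp only [zpow_neg, zpow_natCast, zpow_sub_one₀ ht.ne', Int.cast_neg, Int.cast_natCast] at hz
    exact hz.congr_deriv (by ring)
  refine (hpow.smul (hasDerivAt_integral_comp_add_smul (hu.of_le one_le_two)
    h.contDiff_kernel.continuous h.hasCompactSupport_kernel y t)).congr_deriv ?_
  rw [← inv_smul_smul₀ ht.ne' (∫ z, fderiv ℝ u (y + t • z) z • φ z), hibp]
  match_scalars
  · field_simp
    ring
  · field_simp

lemma scaledAverage_fderiv_fderiv {φ : E → ℝ} (hu : ContDiff ℝ 2 u) (hφ : ContDiff ℝ 2 φ)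
    (hφc : HasCompactSupport φ) (ht : t ≠ 0) (y : E) :
    scaledAverage u (fderiv ℝ (fderiv ℝ φ)) 2 t y
      = ∫ z, φ z • fderiv ℝ (fderiv ℝ u) (y + t • z) := by
  have hw : ContDiff ℝ 2 fun z => u (y + t • z) := hu.comp (by fun_prop)
  have hu'' : Continuous fun z => fderiv ℝ (fderiv ℝ u) (y + t • z) :=
    ((hu.fderiv_right (m := 1) le_rfl).continuous_fderiv one_ne_zero).comp (by fun_prop)
  have hφ'' : Continuous (fderiv ℝ (fderiv ℝ φ)) :=
    (hφ.fderiv_right (m := 1) le_rfl).continuous_fderiv one_ne_zero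
  have hφ''c : HasCompactSupport (fderiv ℝ (fderiv ℝ φ)) := (hφc.fderiv ℝ).fderiv ℝ
  have hint := integrable_smul_of_hasCompactSupport (μ := volume) hw.continuous hφ'' hφ''c
  have hint' : Integrable fun z => φ z • fderiv ℝ (fderiv ℝ u) (y + t • z) :=
    (hφ.continuous.smul hu'').integrable_of_hasCompactSupport hφc.smul_right
  ext a b
  have hibp := integral_smul_fderiv_fderiv_apply (μ := volume) hw hφ hφc a b
  simp_rw [fderiv_fderiv_comp_add_smul] at hibp
  simp only [smul_apply, smul_assoc, integral_smul] at hibp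
  rw [scaledAverage, smul_apply, smul_apply, ContinuousLinearMap.integral_apply hint,
    ContinuousLinearMap.integral_apply (hint.apply_continuousLinearMap a),
    ContinuousLinearMap.integral_apply hint',
    ContinuousLinearMap.integral_apply (hint'.apply_continuousLinearMap a)]
  simp only [smul_apply, hibp, inv_smul_smul₀ (pow_ne_zero 2 ht)]
  simp only [smul_eq_mul, mul_comm]

lemma tendsto_integral_smul_comp_add_smul [CompleteSpace G] {φ : E → ℝ} {T : E → G}
    (hφ : Continuous φ) (hφc : HasCompactSupport φ) (hT : Continuous T) (y : E) :
    Tendsto (fun t : ℝ => ∫ z, φ z • T (y + t • z)) (𝓝[>] 0) (𝓝 ((∫ z, φ z) • T y)) := by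
  have hφT : Continuous (Function.uncurry fun (t : ℝ) z => φ z • T (y + t • z)) := by
    fun_prop
  have hcont := continuous_parametric_integral_of_continuous (μ := volume) hφT hφc
  have hset (t : ℝ) : ∫ z in tsupport φ, φ z • T (y + t • z) = ∫ z, φ z • T (y + t • z) :=
    setIntegral_eq_integral_of_forall_compl_eq_zero fun z hz => by
      rw [image_eq_zero_of_notMem_tsupport hz, zero_smul]
  simp only [hset] at hcont
  simpa [integral_smul_const] using (hcont.tendsto 0).mono_left nhdsWithin_le_nhds

end ScaledAverages

section Elliptic

variable {E : Type*} [NormedAddCommGroup E] [InnerProductSpace ℝ E]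

/-- A symmetric operator `A` with `lam |ξ|² ≤ ⟪A ξ, ξ⟫` and norm at most `Θ`: the coefficient
matrix of an elliptic equation at one point. -/
structure IsElliptic (A : E →L[ℝ] E) (lam Θ : ℝ) : Prop where
  lam_pos : 0 < lam
  isSymmetric : (A : E →ₗ[ℝ] E).IsSymmetric
  coercive : ∀ ξ, lam * ‖ξ‖ ^ 2 ≤ ⟪A ξ, ξ⟫
  norm_le : ‖A‖ ≤ Θ

namespace IsElliptic

variable {A A' : E →L[ℝ] E} {lam Θ : ℝ} (h : IsElliptic A lam Θ) (h' : IsElliptic A' lam Θ)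
include h

lemma mul_norm_le_norm_apply (x : E) : lam * ‖x‖ ≤ ‖A x‖ := by
  rcases eq_or_ne x 0 with rfl | hx
  · simp
  · refine le_of_mul_le_mul_right ?_ (norm_pos_iff.2 hx)
    calc lam * ‖x‖ * ‖x‖ = lam * ‖x‖ ^ 2 := by ring
      _ ≤ ‖A x‖ * ‖x‖ := (h.coercive x).trans (real_inner_le_norm _ _)

lemma div_sqrt_nonneg : 0 ≤ Θ / √lam :=
  div_nonneg ((norm_nonneg A).trans h.norm_le) (Real.sqrt_nonneg lam)

variable [CompleteSpace E]

lemma isUnit : IsUnit A :=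
  A.isUnit_of_forall_le_norm_inner_map (c := ⟨lam, h.lam_pos.le⟩) h.lam_pos fun x =>
    (mul_comm _ _).trans_le ((h.coercive x).trans (le_abs_self _))

lemma apply_inverse_apply (x : E) : A (Ring.inverse A x) = x :=
  congr($(Ring.mul_inverse_cancel A h.isUnit) x)

lemma inverse_apply_apply (x : E) : Ring.inverse A (A x) = x :=
  congr($(Ring.inverse_mul_cancel A h.isUnit) x)

lemma isSymmetric_inverse : ((Ring.inverse A : E →L[ℝ] E) : E →ₗ[ℝ] E).IsSymmetric := fun x y => by
  simpa [h.apply_inverse_apply] using (h.isSymmetric (Ring.inverse A x) (Ring.inverse A y)).symm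

lemma norm_inverse_le : ‖Ring.inverse A‖ ≤ lam⁻¹ := by
  refine ContinuousLinearMap.opNorm_le_bound _ (inv_nonneg.2 h.lam_pos.le) fun x => ?_
  have := h.mul_norm_le_norm_apply (Ring.inverse A x)
  rw [h.apply_inverse_apply] at this
  rwa [← div_eq_inv_mul, le_div_iff₀' h.lam_pos]

lemma mul_norm_inverse_apply_sq_le (x : E) :
    lam * ‖Ring.inverse A x‖ ^ 2 ≤ ⟪Ring.inverse A x, x⟫ := by
  simpa [h.apply_inverse_apply, real_inner_comm] using h.coercive (Ring.inverse A x)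

lemma norm_sq_le_mul_inner_inverse (x : E) :
    ‖x‖ ^ 2 ≤ (Θ / √lam) ^ 2 * ⟪Ring.inverse A x, x⟫ := by
  have hlam := h.lam_pos
  have hx : ‖x‖ ≤ Θ * ‖Ring.inverse A x‖ := by
    simpa [h.apply_inverse_apply] using A.le_of_opNorm_le h.norm_le (Ring.inverse A x)
  calc ‖x‖ ^ 2 ≤ (Θ * ‖Ring.inverse A x‖) ^ 2 := by gcongr
    _ = (Θ / √lam) ^ 2 * (lam * ‖Ring.inverse A x‖ ^ 2) := by
        rw [div_pow, Real.sq_sqrt hlam.le]; field_simp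
    _ ≤ (Θ / √lam) ^ 2 * ⟪Ring.inverse A x, x⟫ := by
        gcongr; exact h.mul_norm_inverse_apply_sq_le x

lemma one_lt_inner_inverse_apply_self {x : E} (hx : Θ / √lam < ‖x‖) :
    1 < ⟪Ring.inverse A x, x⟫ := by
  have hΘ := h.div_sqrt_nonneg
  have hsq : (Θ / √lam) ^ 2 < ‖x‖ ^ 2 := by gcongr
  by_contra! hle
  exact hsq.not_ge ((h.norm_sq_le_mul_inner_inverse x).trans
    (mul_le_of_le_one_right (sq_nonneg _) hle))

include h' in
lemma abs_inner_inverse_sub_inner_inverse_le (x : E) :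
    |⟪Ring.inverse A x, x⟫ - ⟪Ring.inverse A' x, x⟫| ≤ (lam⁻¹ * ‖x‖) ^ 2 * ‖A - A'‖ := by
  have hx : ‖Ring.inverse A x‖ ≤ lam⁻¹ * ‖x‖ :=
    (Ring.inverse A).le_of_opNorm_le h.norm_inverse_le x
  have hx' : ‖Ring.inverse A' x‖ ≤ lam⁻¹ * ‖x‖ :=
    (Ring.inverse A').le_of_opNorm_le h'.norm_inverse_le x
  have hlam := h.lam_pos
  calc |⟪Ring.inverse A x, x⟫ - ⟪Ring.inverse A' x, x⟫|
      = |⟪Ring.inverse A x, (A - A') (Ring.inverse A' x)⟫| := by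
        have hsymm := h.isSymmetric (Ring.inverse A x) (Ring.inverse A' x)
        simp only [ContinuousLinearMap.coe_coe, h.apply_inverse_apply] at hsymm
        rw [sub_apply, inner_sub_right, h'.apply_inverse_apply, ← hsymm,
          real_inner_comm (Ring.inverse A' x) x, abs_sub_comm]
    _ ≤ lam⁻¹ * ‖x‖ * (‖A - A'‖ * (lam⁻¹ * ‖x‖)) :=
        (abs_real_inner_le_norm _ _).trans (mul_le_mul hx
          (((A - A').le_opNorm _).trans (by gcongr)) (norm_nonneg _) (by positivity))
    _ = (lam⁻¹ * ‖x‖) ^ 2 * ‖A - A'‖ := by ring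

end IsElliptic

end Elliptic

section QuadraticKernels

set_option maxSynthPendingDepth 3

open scoped ContDiff NNReal

/-- The smooth cutoff underlying all test functions: it equals `1` near `0` and is supported in
`[-1, 1]`. -/
noncomputable def profile : ContDiffBump (0 : ℝ) := ⟨1 / 2, 1, by norm_num, by norm_num⟩

/-- The primitive of `profile` vanishing at `1`, and hence on `[1, ∞)`. -/
noncomputable def profilePrimitive (s : ℝ) : ℝ := ∫ t in (1 : ℝ)..s, profile t

lemma profile_eq_zero {s : ℝ} (hs : 1 ≤ s) : profile s = 0 :=
  profile.zero_of_le_dist (by simpa [profile] using hs.trans (le_abs_self s))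

lemma hasDerivAt_profilePrimitive (s : ℝ) : HasDerivAt profilePrimitive (profile s) s :=
  profile.continuous.integral_hasStrictDerivAt 1 s |>.hasDerivAt

lemma contDiff_profilePrimitive : ContDiff ℝ ∞ profilePrimitive := by
  refine contDiff_infty_iff_deriv.2 ⟨fun s => (hasDerivAt_profilePrimitive s).differentiableAt, ?_⟩
  rw [funext fun s => (hasDerivAt_profilePrimitive s).deriv]
  exact profile.contDiff

lemma profilePrimitive_eq_zero {s : ℝ} (hs : 1 ≤ s) : profilePrimitive s = 0 :=
  intervalIntegral.integral_zero_ae (.of_forall fun _ ht =>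
    profile_eq_zero (Set.uIoc_of_le hs ▸ ht).1.le)

lemma exists_lipschitzWith_profile : ∃ L : ℝ≥0, LipschitzWith L profile :=
  (profile.contDiff (n := 1)).lipschitzWith_of_hasCompactSupport profile.hasCompactSupport
    one_ne_zero |>.elim fun L hL => ⟨L, hL⟩

variable {E : Type*} [NormedAddCommGroup E] [InnerProductSpace ℝ E]

/-- The cutoff of the ellipsoid `⟪B z, z⟫ ≤ 1`. For `B = A⁻¹` it is adapted to the operator
`tr (A D²)`. -/
noncomputable def quadKernel (B : E →L[ℝ] E) (z : E) : ℝ := profile ⟪B z, z⟫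

/-- The potential `χ` with `Dχ = quadKernel B · B`. -/
noncomputable def quadPotential (B : E →L[ℝ] E) (z : E) : ℝ :=
  (1 / 2) * profilePrimitive ⟪B z, z⟫

variable {B : E →L[ℝ] E}

lemma contDiff_quadKernel : ContDiff ℝ ∞ (quadKernel B) :=
  profile.contDiff.comp (B.contDiff.inner ℝ contDiff_id)

lemma contDiff_quadPotential : ContDiff ℝ ∞ (quadPotential B) :=
  contDiff_const.mul (contDiff_profilePrimitive.comp (B.contDiff.inner ℝ contDiff_id))

section Derivatives

variable (hB : (B : E →ₗ[ℝ] E).IsSymmetric) (z : E)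
include hB

lemma hasFDerivAt_inner_apply_self :
    HasFDerivAt (fun z => ⟪B z, z⟫) ((2 : ℝ) • innerSL ℝ (B z)) z := by
  refine (B.hasFDerivAt.inner ℝ (hasFDerivAt_id z)).congr_fderiv ?_
  ext v
  have hv : ⟪B v, z⟫ = ⟪v, B z⟫ := hB v z
  simp [fderivInnerCLM_apply, hv, real_inner_comm, two_mul]

lemma hasFDerivAt_quadKernel :
    HasFDerivAt (quadKernel B) ((2 * deriv profile ⟪B z, z⟫) • innerSL ℝ (B z)) z := by
  have h := (profile.contDiff (n := 1)).differentiable one_ne_zero ⟪B z, z⟫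
  have hcomp := HasDerivAt.comp_hasFDerivAt (f := fun z => ⟪B z, z⟫) z h.hasDerivAt
    (hasFDerivAt_inner_apply_self hB z)
  exact hcomp.congr_fderiv (by module)

lemma hasFDerivAt_quadPotential :
    HasFDerivAt (quadPotential B) (quadKernel B z • innerSL ℝ (B z)) z := by
  refine (((hasDerivAt_profilePrimitive _).comp_hasFDerivAt z
    (hasFDerivAt_inner_apply_self hB z)).const_mul (1 / 2)).congr_fderiv ?_
  rw [quadKernel]
  module

lemma fderiv_fderiv_quadPotential_apply (a v : E) :
    fderiv ℝ (fderiv ℝ (quadPotential B)) z a v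
      = 2 * deriv profile ⟪B z, z⟫ * ⟪B z, a⟫ * ⟪B z, v⟫ + quadKernel B z * ⟪B a, v⟫ := by
  have hB' : HasFDerivAt (fun z => innerSL ℝ (B z)) ((innerSL ℝ).comp B) z :=
    ((innerSL ℝ).comp B).hasFDerivAt
  rw [funext fun z => (hasFDerivAt_quadPotential hB z).fderiv,
    ((hasFDerivAt_quadKernel hB z).fun_smul hB').fderiv]
  simp
  ring

end Derivatives

lemma abs_quadKernel_le_one (z : E) : |quadKernel B z| ≤ 1 :=
  (abs_of_nonneg profile.nonneg).trans_le profile.le_one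

variable {A A' : E →L[ℝ] E} {lam Θ : ℝ} [CompleteSpace E]

namespace IsElliptic

variable (h : IsElliptic A lam Θ)
include h

lemma tsupport_quadKernel_subset :
    tsupport (quadKernel (Ring.inverse A)) ⊆ closedBall 0 (Θ / √lam) := by
  refine closure_minimal (fun z hz => ?_) isClosed_closedBall
  contrapose! hz
  rw [mem_closedBall_zero_iff, not_le] at hz
  simpa [quadKernel] using profile_eq_zero (h.one_lt_inner_inverse_apply_self hz).le

lemma tsupport_quadPotential_subset :
    tsupport (quadPotential (Ring.inverse A)) ⊆ closedBall 0 (Θ / √lam) := by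
  refine closure_minimal (fun z hz => ?_) isClosed_closedBall
  contrapose! hz
  rw [mem_closedBall_zero_iff, not_le] at hz
  simp [quadPotential, profilePrimitive_eq_zero (h.one_lt_inner_inverse_apply_self hz).le]

lemma kernelPair {ι : Type*} [Fintype ι] (e : OrthonormalBasis ι ℝ E) :
    KernelPair e A 0 (Θ / √lam) (quadKernel (Ring.inverse A))
      (quadPotential (Ring.inverse A)) where
  contDiff_kernel := contDiff_quadKernel
  contDiff_potential := contDiff_quadPotential
  tsupport_kernel := h.tsupport_quadKernel_subset
  tsupport_potential := h.tsupport_quadPotential_subset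
  homogeneity z := by
    have hQ : ∑ i, ⟪Ring.inverse A z, A (e i)⟫ * ⟪Ring.inverse A z, e i⟫
        = ⟪Ring.inverse A z, z⟫ := by
      have hsymm x : ⟪Ring.inverse A z, A x⟫ = ⟪z, x⟫ := by
        simpa [h.apply_inverse_apply] using (h.isSymmetric (Ring.inverse A z) x).symm
      simpa [hsymm, real_inner_comm] using e.sum_inner_mul_inner z (Ring.inverse A z)
    simp only [(hasFDerivAt_quadKernel h.isSymmetric_inverse z).fderiv, traceForm_apply,
      fderiv_fderiv_quadPotential_apply h.isSymmetric_inverse, h.inverse_apply_apply,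
      Finset.sum_add_distrib, mul_assoc, ← Finset.mul_sum, hQ]
    simp [Module.finrank_eq_card_basis e.toBasis]
    ring

variable {L : ℝ≥0} (hL : LipschitzWith L profile)
include hL

lemma norm_fderiv_fderiv_quadPotential_le (z : E) :
    ‖fderiv ℝ (fderiv ℝ (quadPotential (Ring.inverse A))) z‖
      ≤ 2 * L * (lam⁻¹ * (Θ / √lam)) ^ 2 + lam⁻¹ := by
  have hlam := h.lam_pos
  by_cases hz : z ∈ closedBall 0 (Θ / √lam)
  swap
  · have hsupp : tsupport (fderiv ℝ (fderiv ℝ (quadPotential (Ring.inverse A))))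
        ⊆ closedBall 0 (Θ / √lam) :=
      (tsupport_fderiv_subset ℝ).trans
        ((tsupport_fderiv_subset ℝ).trans h.tsupport_quadPotential_subset)
    rw [image_eq_zero_of_notMem_tsupport fun hz' => hz (hsupp hz'), norm_zero]
    positivity
  have hinv x : ‖Ring.inverse A x‖ ≤ lam⁻¹ * ‖x‖ :=
    (Ring.inverse A).le_of_opNorm_le h.norm_inverse_le x
  have hBz : ‖Ring.inverse A z‖ ≤ lam⁻¹ * (Θ / √lam) :=
    (hinv z).trans (by gcongr; exact mem_closedBall_zero_iff.1 hz)
  have hinner w : ‖⟪Ring.inverse A z, w⟫‖ ≤ lam⁻¹ * (Θ / √lam) * ‖w‖ :=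
    (norm_inner_le_norm _ _).trans (by gcongr)
  refine ContinuousLinearMap.opNorm_le_bound₂ _ (by positivity) fun a v => ?_
  have hfirst : ‖2 * deriv profile ⟪Ring.inverse A z, z⟫ * ⟪Ring.inverse A z, a⟫
      * ⟪Ring.inverse A z, v⟫‖ ≤ 2 * L * (lam⁻¹ * (Θ / √lam)) ^ 2 * ‖a‖ * ‖v‖ := by
    rw [norm_mul, norm_mul, norm_mul, Real.norm_two]
    calc 2 * ‖deriv profile ⟪Ring.inverse A z, z⟫‖ * ‖⟪Ring.inverse A z, a⟫‖
          * ‖⟪Ring.inverse A z, v⟫‖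
        ≤ 2 * L * (lam⁻¹ * (Θ / √lam) * ‖a‖) * (lam⁻¹ * (Θ / √lam) * ‖v‖) := by
          gcongr
          · exact mul_nonneg (by positivity) ((norm_nonneg _).trans (hinner a))
          · exact norm_deriv_le_of_lipschitz hL
          · exact hinner a
          · exact hinner v
      _ = 2 * L * (lam⁻¹ * (Θ / √lam)) ^ 2 * ‖a‖ * ‖v‖ := by ring
  have hsecond : ‖quadKernel (Ring.inverse A) z * ⟪Ring.inverse A a, v⟫‖
      ≤ lam⁻¹ * ‖a‖ * ‖v‖ := by
    rw [norm_mul]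
    refine (mul_le_of_le_one_left (norm_nonneg _) (abs_quadKernel_le_one z)).trans ?_
    exact (norm_inner_le_norm _ _).trans (by gcongr; exact hinv a)
  rw [fderiv_fderiv_quadPotential_apply h.isSymmetric_inverse, add_mul, add_mul]
  exact norm_add_le_of_le hfirst hsecond

lemma abs_quadKernel_sub_quadKernel_le (h' : IsElliptic A' lam Θ) (z : E) :
    |quadKernel (Ring.inverse A) z - quadKernel (Ring.inverse A') z|
      ≤ L * ((lam⁻¹ * ‖z‖) ^ 2 * ‖A - A'‖) :=
  (hL.dist_le_mul _ _).trans
    (mul_le_mul_of_nonneg_left (h.abs_inner_inverse_sub_inner_inverse_le h' z) L.2)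

end IsElliptic

end QuadraticKernels

section NormalizedSolutions

set_option maxSynthPendingDepth 3

variable {ι E : Type*} [Fintype ι] [NormedAddCommGroup E] [InnerProductSpace ℝ E]

/-- `u` solves `tr (A D²u) = g` in the ball of radius `R` around a zero `x₀` of `D²u`. The lower
order terms are absorbed in `g`, whose derivative `g'` is therefore controlled near `x₀` only up to
the size of `D²u`. -/
structure IsNormalizedSolution (e : OrthonormalBasis ι ℝ E) (A : E → E →L[ℝ] E) (g : E → ℝ)
    (g' : E → E →L[ℝ] ℝ) (u : E → ℝ) (x₀ : E) (lam Θ M α R : ℝ) : Prop where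
  exponent_mem : α ∈ Set.Ioo (0 : ℝ) 1
  radius_mem : R ∈ Set.Ioc (0 : ℝ) 1
  M_nonneg : 0 ≤ M
  contDiff : ContDiff ℝ 2 u
  hess_center : fderiv ℝ (fderiv ℝ u) x₀ = 0
  isElliptic : ∀ x ∈ closedBall x₀ R, IsElliptic (A x) lam Θ
  norm_coeff_sub_le : ∀ x ∈ closedBall x₀ R, ∀ y ∈ closedBall x₀ R,
    ‖A x - A y‖ ≤ M * ‖x - y‖ ^ α
  equation : ∀ x ∈ closedBall x₀ R, traceForm e (A x) (fderiv ℝ (fderiv ℝ u) x) = g x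
  hasFDerivAt_rhs : ∀ x ∈ closedBall x₀ R, HasFDerivAt g (g' x) x
  norm_rhs_deriv_sub_le : ∀ x ∈ closedBall x₀ R,
    ‖g' x - g' x₀‖ ≤ M * (‖x - x₀‖ ^ α + ‖fderiv ℝ (fderiv ℝ u) x‖)

variable {e : OrthonormalBasis ι ℝ E} {A : E → E →L[ℝ] E} {g : E → ℝ} {g' : E → E →L[ℝ] ℝ}
  {u : E → ℝ} {x₀ : E} {lam Θ M α R : ℝ}

namespace IsNormalizedSolution

variable (h : IsNormalizedSolution e A g g' u x₀ lam Θ M α R)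
include h

lemma continuous_hess : Continuous (fderiv ℝ (fderiv ℝ u)) :=
  (h.contDiff.fderiv_right (m := 1) le_rfl).continuous_fderiv one_ne_zero

lemma isElliptic_center : IsElliptic (A x₀) lam Θ :=
  h.isElliptic x₀ (mem_closedBall_self h.radius_mem.1.le)

lemma abs_rhs_sub_affine_le {x y : E} {τ N : ℝ} (hτ : τ ≤ R)
    (hN : ∀ z ∈ closedBall x₀ τ, ‖fderiv ℝ (fderiv ℝ u) z‖ ≤ N)
    (hx : x ∈ closedBall x₀ τ) (hy : y ∈ closedBall x₀ τ) :
    |g x - (g y + g' x₀ (x - y))| ≤ M * (τ ^ α + N) * ‖x - y‖ := by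
  have hR : closedBall x₀ τ ⊆ closedBall x₀ R := closedBall_subset_closedBall hτ
  have hbound : ∀ z ∈ closedBall x₀ τ, ‖g' z - g' x₀‖ ≤ M * (τ ^ α + N) := fun z hz => by
    refine (h.norm_rhs_deriv_sub_le z (hR hz)).trans ?_
    have := h.M_nonneg
    have := h.exponent_mem.1
    gcongr
    · exact mem_closedBall_iff_norm.1 hz
    · exact hN z hz
  simpa [sub_sub] using (convex_closedBall x₀ τ).norm_image_sub_le_of_norm_hasFDerivWithin_le'
    (fun z hz => (h.hasFDerivAt_rhs z (hR hz)).hasFDerivWithinAt) hbound hy hx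

lemma abs_traceForm_sub_affine_le {p x y : E} {τ N : ℝ} (hτ : τ ≤ R)
    (hN : ∀ z ∈ closedBall x₀ τ, ‖fderiv ℝ (fderiv ℝ u) z‖ ≤ N)
    (hp : p ∈ closedBall x₀ R) (hx : x ∈ closedBall x₀ τ) (hy : y ∈ closedBall x₀ τ) :
    |traceForm e (A p) (fderiv ℝ (fderiv ℝ u) x) - (g y + g' x₀ (x - y))|
      ≤ Fintype.card ι * (N * (M * ‖p - x‖ ^ α)) + M * (τ ^ α + N) * ‖x - y‖ := by
  have hxR : x ∈ closedBall x₀ R := closedBall_subset_closedBall hτ hx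
  have hfreeze : |traceForm e (A p) (fderiv ℝ (fderiv ℝ u) x) - g x|
      ≤ Fintype.card ι * (N * (M * ‖p - x‖ ^ α)) := by
    rw [← h.equation x hxR, traceForm_sub_traceForm_apply]
    refine (norm_traceForm_apply_le e (A p - A x) (fderiv ℝ (fderiv ℝ u) x)).trans ?_
    gcongr
    · exact (norm_nonneg _).trans (hN x hx)
    · exact hN x hx
    · exact h.norm_coeff_sub_le p hp x hxR
  exact (abs_sub_le _ (g x) _).trans (add_le_add hfreeze (h.abs_rhs_sub_affine_le hτ hN hx hy))

lemma abs_traceForm_sub_affine_le_mul_rpow {p x y : E} {s t ρ K ε : ℝ} (hρ : 0 ≤ ρ) (hK : 0 ≤ K)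
    (hgrowth : TruncatedGrowth (fderiv ℝ (fderiv ℝ u)) x₀ R K ε) (hs : 0 < s) (hst : s ≤ t)
    (hεt : ε ≤ t) (htR : (1 + ρ) * t ≤ R) (hy : ‖y - x₀‖ ≤ t) (hp : p ∈ closedBall x₀ R)
    (hxy : ‖x - y‖ ≤ ρ * s) (hpx : ‖p - x‖ ≤ (1 + ρ) * s) :
    |traceForm e (A p) (fderiv ℝ (fderiv ℝ u) x) - (g y + g' x₀ (x - y))|
      ≤ M * (1 + ρ) ^ 2 * (1 + Fintype.card ι) * (1 + K) * (t * s ^ α) := by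
  obtain ⟨hα, hα₁⟩ := h.exponent_mem
  have hM := h.M_nonneg
  have ht : 0 < t := hs.trans_le hst
  have hP : 1 ≤ 1 + ρ := le_add_of_nonneg_right hρ
  have htP : t ≤ (1 + ρ) * t := le_mul_of_one_le_left ht.le hP
  have hs₁ : s ≤ 1 := hst.trans (htP.trans (htR.trans h.radius_mem.2))
  have hyτ : y ∈ closedBall x₀ ((1 + ρ) * t) := mem_closedBall_iff_norm.2 (hy.trans htP)
  have hxτ : x ∈ closedBall x₀ ((1 + ρ) * t) := by
    rw [mem_closedBall_iff_norm]
    linarith [norm_sub_le_norm_sub_add_norm_sub x y x₀, mul_le_mul_of_nonneg_left hst hρ]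
  have hN : ∀ z ∈ closedBall x₀ ((1 + ρ) * t), ‖fderiv ℝ (fderiv ℝ u) z‖ ≤ K * ((1 + ρ) * t) :=
    fun z hz => hgrowth.norm_le hK (hεt.trans htP) htR hz
  refine (h.abs_traceForm_sub_affine_le htR hN hp hxτ hyτ).trans ?_
  have hcoeff : ‖p - x‖ ^ α ≤ (1 + ρ) * s ^ α :=
    (Real.rpow_le_rpow (norm_nonneg _) hpx hα.le).trans (mul_rpow_le_mul_rpow hP hs.le hα₁.le)
  have hrhs : (((1 + ρ) * t) ^ α + K * ((1 + ρ) * t)) * s ≤ (1 + ρ) * (1 + K) * (t * s ^ α) :=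
    calc (((1 + ρ) * t) ^ α + K * ((1 + ρ) * t)) * s
        ≤ ((1 + ρ) * t ^ α + K * ((1 + ρ) * t)) * s := by
          gcongr; exact mul_rpow_le_mul_rpow hP ht.le hα₁.le
      _ = (1 + ρ) * (t ^ α * s + K * (t * s)) := by ring
      _ ≤ (1 + ρ) * (t * s ^ α + K * (t * s ^ α)) := by
          have := rpow_mul_le_mul_rpow hs hst hα₁.le
          have := Real.self_le_rpow_of_le_one hs.le hs₁ hα₁.le
          gcongr
      _ = (1 + ρ) * (1 + K) * (t * s ^ α) := by ring
  calc Fintype.card ι * (K * ((1 + ρ) * t) * (M * ‖p - x‖ ^ α))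
        + M * (((1 + ρ) * t) ^ α + K * ((1 + ρ) * t)) * ‖x - y‖
      ≤ Fintype.card ι * (K * ((1 + ρ) * t) * (M * ((1 + ρ) * s ^ α)))
        + M * (((1 + ρ) * t) ^ α + K * ((1 + ρ) * t)) * (ρ * s) := by gcongr
    _ = M * (Fintype.card ι * (1 + ρ) ^ 2 * K * (t * s ^ α)
        + ρ * ((((1 + ρ) * t) ^ α + K * ((1 + ρ) * t)) * s)) := by ring
    _ ≤ M * (Fintype.card ι * (1 + ρ) ^ 2 * (1 + K) * (t * s ^ α)
        + (1 + ρ) * ((1 + ρ) * (1 + K) * (t * s ^ α))) := by gcongr <;> linarith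
    _ = _ := by ring

end IsNormalizedSolution

end NormalizedSolutions

section FrozenAverages

set_option maxSynthPendingDepth 3

variable {ι E G : Type*} [Fintype ι] [NormedAddCommGroup E] [InnerProductSpace ℝ E]
  [FiniteDimensional ℝ E] [MeasurableSpace E] [BorelSpace E] [NormedAddCommGroup G]
  [NormedSpace ℝ G]

lemma norm_integral_smul_fderiv_fderiv_le {F : E → ℝ} {ψ : E → G} {ρ C η : ℝ}
    (hF : Continuous F) (hψ : ContDiff ℝ 2 ψ) (hψs : tsupport ψ ⊆ closedBall 0 ρ)
    (hC : ∀ z, ‖fderiv ℝ (fderiv ℝ ψ) z‖ ≤ C) (c : ℝ) (l : E →L[ℝ] ℝ)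
    (hη : ∀ z ∈ closedBall 0 ρ, |F z - (c + l z)| ≤ η) :
    ‖∫ z, F z • fderiv ℝ (fderiv ℝ ψ) z‖ ≤ η * C * volume.real (closedBall (0 : E) ρ) := by
  have hψs'' : tsupport (fderiv ℝ (fderiv ℝ ψ)) ⊆ closedBall 0 ρ :=
    (tsupport_fderiv_subset ℝ).trans ((tsupport_fderiv_subset ℝ).trans hψs)
  have hψc : HasCompactSupport ψ :=
    (isCompact_closedBall 0 ρ).of_isClosed_subset (isClosed_tsupport ψ) hψs
  have hψ'' : Continuous (fderiv ℝ (fderiv ℝ ψ)) :=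
    (hψ.fderiv_right (m := 1) le_rfl).continuous_fderiv one_ne_zero
  have hψ''c : HasCompactSupport (fderiv ℝ (fderiv ℝ ψ)) := (hψc.fderiv ℝ).fderiv ℝ
  have hsub : ∫ z, F z • fderiv ℝ (fderiv ℝ ψ) z
      = ∫ z, (F z - (c + l z)) • fderiv ℝ (fderiv ℝ ψ) z := by
    simp only [sub_smul]
    rw [integral_sub (integrable_smul_of_hasCompactSupport hF hψ'' hψ''c)
      (integrable_smul_of_hasCompactSupport (by fun_prop) hψ'' hψ''c),
      integral_affine_smul_fderiv_fderiv hψ hψc, sub_zero]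
  rw [hsub]
  refine norm_integral_le_mul_volume_closedBall (fun z hz => ?_) fun z hz => ?_
  · rw [image_eq_zero_of_notMem_tsupport fun hz' => hz (hψs'' hz'), smul_zero]
  · rw [norm_smul]
    exact mul_le_mul (hη z hz) (hC z) (norm_nonneg _) ((abs_nonneg _).trans (hη z hz))

variable {e : OrthonormalBasis ι ℝ E} {A : E → E →L[ℝ] E} {g : E → ℝ} {g' : E → E →L[ℝ] ℝ}
  {u : E → ℝ} {x₀ : E} {lam Θ M α R : ℝ}

namespace IsNormalizedSolution

variable (h : IsNormalizedSolution e A g g' u x₀ lam Θ M α R)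
include h

lemma norm_deriv_scaledAverage_le {k : ℕ} {ρ C K ε s t : ℝ} {p y : E} {φ ψ : E → G} (hρ : 0 ≤ ρ)
    (hφ : KernelPair e (A p) k ρ φ ψ) (hC : ∀ z, ‖fderiv ℝ (fderiv ℝ ψ) z‖ ≤ C) (hK : 0 ≤ K)
    (hgrowth : TruncatedGrowth (fderiv ℝ (fderiv ℝ u)) x₀ R K ε) (hp : p ∈ closedBall x₀ R)
    (hs : 0 < s) (hst : s ≤ t) (hεt : ε ≤ t) (htR : (1 + ρ) * t ≤ R) (hy : ‖y - x₀‖ ≤ t)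
    (hpx : ∀ x, ‖x - y‖ ≤ ρ * s → ‖p - x‖ ≤ (1 + ρ) * s) :
    ‖deriv (fun s => scaledAverage u (fderiv ℝ (fderiv ℝ φ)) (k + 2) s y) s‖
      ≤ C * volume.real (closedBall (0 : E) ρ) * M * (1 + ρ) ^ 2 * (1 + Fintype.card ι) * (1 + K)
        * (t * s ^ (α - 1 - k)) := by
  have hF : Continuous fun z => traceForm e (A p) (fderiv ℝ (fderiv ℝ u) (y + s • z)) :=
    (traceForm e (A p)).continuous.comp (h.continuous_hess.comp (by fun_prop))
  have hη : ∀ z ∈ closedBall 0 ρ, |traceForm e (A p) (fderiv ℝ (fderiv ℝ u) (y + s • z))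
      - (g y + (s • g' x₀) z)| ≤ M * (1 + ρ) ^ 2 * (1 + Fintype.card ι) * (1 + K) * (t * s ^ α) :=
    fun z hz => by
      have hz' : ‖y + s • z - y‖ ≤ ρ * s := by
        rw [add_sub_cancel_left, norm_smul, Real.norm_of_nonneg hs.le, mul_comm]
        gcongr
        exact mem_closedBall_zero_iff.1 hz
      simpa using h.abs_traceForm_sub_affine_le_mul_rpow hρ hK hgrowth hs hst hεt htR hy hp hz'
        (hpx _ hz')
  have hint := norm_integral_smul_fderiv_fderiv_le hF (contDiff_infty.1 hφ.contDiff_potential 2)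
    hφ.tsupport_potential hC _ _ hη
  have hpow : s ^ (α - 1 - k) = (s ^ (k + 2))⁻¹ * s * s ^ α := by
    rw [Real.rpow_sub_natCast hs.ne', Real.rpow_sub_one hs.ne']
    field_simp
    ring
  rw [(hφ.succ.succ.hasDerivAt_scaledAverage h.contDiff y hs).deriv, norm_smul, norm_neg,
    Real.norm_of_nonneg (by positivity)]
  refine (mul_le_mul_of_nonneg_left hint (by positivity)).trans_eq ?_
  rw [hpow]
  ring

lemma norm_scaledAverage_sub_scaledAverage_le {k : ℕ} {ρ C K ε s r : ℝ} {y : E} {φ ψ : E → G}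
    (hρ : 0 ≤ ρ) (hφ : KernelPair e (A x₀) k ρ φ ψ) (hC : ∀ z, ‖fderiv ℝ (fderiv ℝ ψ) z‖ ≤ C)
    (hK : 0 ≤ K) (hgrowth : TruncatedGrowth (fderiv ℝ (fderiv ℝ u)) x₀ R K ε)
    (hk : α + 1 - k ≠ 0) (hs : 0 < s) (hεs : ε ≤ s) (hsr : s ≤ r) (hrR : (1 + ρ) * r ≤ R)
    (hy : ‖y - x₀‖ ≤ s) :
    ‖scaledAverage u (fderiv ℝ (fderiv ℝ φ)) (k + 2) r y
        - scaledAverage u (fderiv ℝ (fderiv ℝ φ)) (k + 2) s y‖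
      ≤ C * volume.real (closedBall (0 : E) ρ) * M * (1 + ρ) ^ 2 * (1 + Fintype.card ι) * (1 + K)
        * ((r ^ (α + 1 - k) - s ^ (α + 1 - k)) / (α + 1 - k)) := by
  refine norm_sub_le_mul_rpow_sub_rpow_div
    (f := fun s => scaledAverage u (fderiv ℝ (fderiv ℝ φ)) (k + 2) s y) hs hsr hk
    (fun t ht => (hφ.succ.succ.hasDerivAt_scaledAverage h.contDiff y
      (hs.trans_le ht.1)).differentiableAt.hasDerivAt) fun t ht => ?_
  have ht₀ : 0 < t := hs.trans_le ht.1
  have hyt : ‖y - x₀‖ ≤ t := hy.trans ht.1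
  refine (h.norm_deriv_scaledAverage_le hρ hφ hC hK hgrowth
    (mem_closedBall_self h.radius_mem.1.le) ht₀ le_rfl (hεs.trans ht.1)
    (le_trans (by gcongr; exact ht.2) hrR) hyt fun x hx => ?_).trans_eq ?_
  · rw [norm_sub_rev]
    linarith [norm_sub_le_norm_sub_add_norm_sub x y x₀]
  · rw [mul_comm t, ← Real.rpow_add_one ht₀.ne']
    ring_nf

lemma norm_scaledAverage_sub_scaledAverage_le_rpow {ρ C K ε s t : ℝ} {y : E} {φ ψ : E → ℝ}
    (hρ : 0 ≤ ρ) (hφ : KernelPair e (A y) 0 ρ φ ψ) (hC : ∀ z, ‖fderiv ℝ (fderiv ℝ ψ) z‖ ≤ C)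
    (hK : 0 ≤ K) (hgrowth : TruncatedGrowth (fderiv ℝ (fderiv ℝ u)) x₀ R K ε) (hs : 0 < s)
    (hst : s ≤ t) (hεt : ε ≤ t) (htR : (1 + ρ) * t ≤ R) (hy : ‖y - x₀‖ ≤ t) :
    ‖scaledAverage u (fderiv ℝ (fderiv ℝ φ)) 2 t y - scaledAverage u (fderiv ℝ (fderiv ℝ φ)) 2 s y‖
      ≤ C * volume.real (closedBall (0 : E) ρ) * M * (1 + ρ) ^ 2 * (1 + Fintype.card ι) * (1 + K)
        * (t ^ (1 + α) / α) := by
  obtain ⟨hα, -⟩ := h.exponent_mem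
  have ht : 0 < t := hs.trans_le hst
  have hyR : y ∈ closedBall x₀ R :=
    mem_closedBall_iff_norm.2 (hy.trans ((le_mul_of_one_le_left ht.le (by linarith)).trans htR))
  set D := C * volume.real (closedBall (0 : E) ρ) * M * (1 + ρ) ^ 2 * (1 + Fintype.card ι)
    * (1 + K) with hD
  have hD₀ : 0 ≤ D := by
    have := (norm_nonneg _).trans (hC 0)
    have := h.M_nonneg
    positivity
  refine (norm_sub_le_mul_rpow_sub_rpow_div (D := D * t)
    (f := fun s => scaledAverage u (fderiv ℝ (fderiv ℝ φ)) 2 s y) hs hst hα.ne'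
    (fun τ hτ => (hφ.succ.succ.hasDerivAt_scaledAverage h.contDiff y
      (hs.trans_le hτ.1)).differentiableAt.hasDerivAt) fun τ hτ => ?_).trans ?_
  · have hτ₀ : 0 < τ := hs.trans_le hτ.1
    refine (h.norm_deriv_scaledAverage_le hρ hφ hC hK hgrowth hyR hτ₀ hτ.2 hεt htR hy
      fun x hx => ?_).trans_eq ?_
    · rw [norm_sub_rev]
      linarith
    · rw [← hD, Nat.cast_zero, sub_zero, ← mul_assoc]
  · rw [Real.rpow_one_add' ht.le (by linarith), mul_assoc, mul_div_assoc]
    gcongr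
    linarith [Real.rpow_nonneg hs.le α]

lemma norm_integral_smul_hess_sub_le {ρ C K ε t : ℝ} {y : E} {φ ψ : E → ℝ} (hρ : 0 ≤ ρ)
    (hφ : KernelPair e (A y) 0 ρ φ ψ) (hC : ∀ z, ‖fderiv ℝ (fderiv ℝ ψ) z‖ ≤ C) (hK : 0 ≤ K)
    (hgrowth : TruncatedGrowth (fderiv ℝ (fderiv ℝ u)) x₀ R K ε) (ht : 0 < t) (hεt : ε ≤ t)
    (htR : (1 + ρ) * t ≤ R) (hy : ‖y - x₀‖ ≤ t) :
    ‖(∫ z, φ z • fderiv ℝ (fderiv ℝ u) (y + t • z)) - (∫ z, φ z) • fderiv ℝ (fderiv ℝ u) y‖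
      ≤ C * volume.real (closedBall (0 : E) ρ) * M * (1 + ρ) ^ 2 * (1 + Fintype.card ι) * (1 + K)
        * (t ^ (1 + α) / α) := by
  refine le_of_tendsto ((tendsto_const_nhds.sub (tendsto_integral_smul_comp_add_smul
      hφ.contDiff_kernel.continuous hφ.hasCompactSupport_kernel h.continuous_hess y)).norm)
    (eventually_of_mem (Ioc_mem_nhdsGT ht) fun s hs => ?_)
  have havg {τ : ℝ} (hτ : 0 < τ) := scaledAverage_fderiv_fderiv h.contDiff
    (contDiff_infty.1 hφ.contDiff_kernel 2) hφ.hasCompactSupport_kernel hτ.ne' y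
  rw [← havg ht, ← havg hs.1]
  exact h.norm_scaledAverage_sub_scaledAverage_le_rpow hρ hφ hC hK hgrowth hs.1 hs.2 hεt htR hy

end IsNormalizedSolution

lemma norm_integral_smul_sub_sub_le [CompleteSpace G] {φ φ' : E → ℝ} {T : E → G} {T₀ : G}
    {ρ η c : ℝ} (hφ : Continuous φ) (hφ' : Continuous φ') (hφs : tsupport φ ⊆ closedBall 0 ρ)
    (hφs' : tsupport φ' ⊆ closedBall 0 ρ) (hT : Continuous T)
    (hη : ∀ z ∈ closedBall 0 ρ, |φ z - φ' z| ≤ η) (hc : ∀ z ∈ closedBall 0 ρ, ‖T z - T₀‖ ≤ c) :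
    ‖((∫ z, φ z • T z) - (∫ z, φ z) • T₀) - ((∫ z, φ' z • T z) - (∫ z, φ' z) • T₀)‖
      ≤ η * c * volume.real (closedBall (0 : E) ρ) := by
  have hint {f : E → ℝ} (hf : Continuous f) (hfs : tsupport f ⊆ closedBall 0 ρ) :
      Integrable (fun z => f z • (T z - T₀)) ∧
        ∫ z, f z • (T z - T₀) = (∫ z, f z • T z) - (∫ z, f z) • T₀ := by
    have hfc : HasCompactSupport f :=
      (isCompact_closedBall 0 ρ).of_isClosed_subset (isClosed_tsupport f) hfs
    have hcont {S : E → G} (hS : Continuous S) : Integrable fun z => f z • S z :=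
      (hf.smul hS).integrable_of_hasCompactSupport hfc.smul_right
    refine ⟨hcont (hT.sub continuous_const), ?_⟩
    simp only [smul_sub]
    rw [integral_sub (hcont hT) (hcont continuous_const), integral_smul_const]
  obtain ⟨hi, he⟩ := hint hφ hφs
  obtain ⟨hi', he'⟩ := hint hφ' hφs'
  rw [← he, ← he', ← integral_sub hi hi']
  refine norm_integral_le_mul_volume_closedBall (fun z hz => ?_) fun z hz => ?_
  · rw [image_eq_zero_of_notMem_tsupport fun hz' => hz (hφs hz'),
      image_eq_zero_of_notMem_tsupport fun hz' => hz (hφs' hz')]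
    simp
  · rw [← sub_smul, norm_smul]
    exact mul_le_mul (hη z hz) (hc z hz) (norm_nonneg _) ((abs_nonneg _).trans (hη z hz))

end FrozenAverages

section HessianExpansion

set_option maxSynthPendingDepth 3

open scoped ContDiff NNReal

variable {ι E G : Type*} [Fintype ι] [NormedAddCommGroup E] [InnerProductSpace ℝ E]
  [FiniteDimensional ℝ E] [MeasurableSpace E] [BorelSpace E] [NormedAddCommGroup G]
  [NormedSpace ℝ G]

lemma integral_quadKernel_pos {B : E →L[ℝ] E} (hB : HasCompactSupport (quadKernel B)) :
    0 < ∫ z, quadKernel B z :=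
  contDiff_quadKernel.continuous.integral_pos_of_hasCompactSupport_nonneg_nonzero hB
    (fun _ => profile.nonneg) (x := 0) (by
      rw [quadKernel, map_zero, inner_zero_left, profile.one_of_mem_closedBall
        (mem_closedBall_self profile.rIn_pos.le)]
      exact one_ne_zero)

variable {e : OrthonormalBasis ι ℝ E} {A : E → E →L[ℝ] E} {g : E → ℝ} {g' : E → E →L[ℝ] ℝ}
  {u : E → ℝ} {x₀ : E} {lam Θ M α R : ℝ}

namespace IsNormalizedSolution

variable (h : IsNormalizedSolution e A g g' u x₀ lam Θ M α R)
include h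

lemma norm_integral_quadKernel_smul_sub_sub_le {K ε t : ℝ} {L : ℝ≥0}
    (hL : LipschitzWith L profile) (hK : 0 ≤ K)
    (hgrowth : TruncatedGrowth (fderiv ℝ (fderiv ℝ u)) x₀ R K ε) (ht : 0 < t) (hεt : ε ≤ t)
    (htR : (1 + Θ / √lam) * t ≤ R) {y : E} (hy : ‖y - x₀‖ ≤ t) :
    ‖((∫ z, quadKernel (Ring.inverse (A x₀)) z • fderiv ℝ (fderiv ℝ u) (y + t • z))
          - (∫ z, quadKernel (Ring.inverse (A x₀)) z) • fderiv ℝ (fderiv ℝ u) y)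
        - ((∫ z, quadKernel (Ring.inverse (A y)) z • fderiv ℝ (fderiv ℝ u) (y + t • z))
          - (∫ z, quadKernel (Ring.inverse (A y)) z) • fderiv ℝ (fderiv ℝ u) y)‖
      ≤ L * (lam⁻¹ * (Θ / √lam)) ^ 2 * M * (2 * (1 + Θ / √lam))
        * volume.real (closedBall (0 : E) (Θ / √lam)) * (1 + K) * t ^ (1 + α) := by
  set ρ := Θ / √lam
  have hρ : 0 ≤ ρ := h.isElliptic_center.div_sqrt_nonneg
  have hα := h.exponent_mem.1
  have hM := h.M_nonneg
  have hlam := h.isElliptic_center.lam_pos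
  have htP : t ≤ (1 + ρ) * t := le_mul_of_one_le_left ht.le (by linarith)
  have hyR : y ∈ closedBall x₀ R := mem_closedBall_iff_norm.2 ((hy.trans htP).trans htR)
  have hcoeff : ‖A x₀ - A y‖ ≤ M * t ^ α := by
    refine (h.norm_coeff_sub_le x₀ (mem_closedBall_self h.radius_mem.1.le) y hyR).trans ?_
    rw [norm_sub_rev]
    gcongr
  have hkernel : ∀ z ∈ closedBall (0 : E) ρ,
      |quadKernel (Ring.inverse (A x₀)) z - quadKernel (Ring.inverse (A y)) z|
        ≤ L * ((lam⁻¹ * ρ) ^ 2 * (M * t ^ α)) := fun z hz => by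
    refine (h.isElliptic_center.abs_quadKernel_sub_quadKernel_le hL (h.isElliptic y hyR) z).trans ?_
    gcongr
    exact mem_closedBall_zero_iff.1 hz
  refine (norm_integral_smul_sub_sub_le contDiff_quadKernel.continuous
    contDiff_quadKernel.continuous h.isElliptic_center.tsupport_quadKernel_subset
    (h.isElliptic y hyR).tsupport_quadKernel_subset (h.continuous_hess.comp (by fun_prop))
    hkernel fun z hz => hgrowth.norm_apply_add_smul_sub_le hK ht.le hεt htR hy hz).trans ?_
  calc L * ((lam⁻¹ * ρ) ^ 2 * (M * t ^ α)) * (2 * (K * ((1 + ρ) * t)))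
        * volume.real (closedBall (0 : E) ρ)
      = L * (lam⁻¹ * ρ) ^ 2 * M * (2 * (1 + ρ)) * volume.real (closedBall (0 : E) ρ) * K
        * t ^ (1 + α) := by rw [Real.rpow_one_add' ht.le (by linarith)]; ring
    _ ≤ _ := by gcongr; linarith

lemma exists_norm_average_sub_le : ∃ C, 0 ≤ C ∧ ∀ K ε, 0 ≤ K →
    TruncatedGrowth (fderiv ℝ (fderiv ℝ u)) x₀ R K ε → ∀ t y, 0 < t → ε ≤ t →
      (1 + Θ / √lam) * t ≤ R → ‖y - x₀‖ ≤ t →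
        ‖scaledAverage u (fderiv ℝ (fderiv ℝ (quadKernel (Ring.inverse (A x₀))))) 2 t y
            - (∫ z, quadKernel (Ring.inverse (A x₀)) z) • fderiv ℝ (fderiv ℝ u) y‖
          ≤ C * (1 + K) * t ^ (1 + α) := by
  obtain ⟨L, hL⟩ := exists_lipschitzWith_profile
  have hρ := h.isElliptic_center.div_sqrt_nonneg
  have hα := h.exponent_mem.1
  have hM := h.M_nonneg
  have hlam := h.isElliptic_center.lam_pos
  refine ⟨(2 * L * (lam⁻¹ * (Θ / √lam)) ^ 2 + lam⁻¹) * volume.real (closedBall (0 : E) (Θ / √lam))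
      * M * (1 + Θ / √lam) ^ 2 * (1 + Fintype.card ι) / α
      + L * (lam⁻¹ * (Θ / √lam)) ^ 2 * M * (2 * (1 + Θ / √lam))
        * volume.real (closedBall (0 : E) (Θ / √lam)), by positivity,
    fun K ε hK hgrowth t y ht hεt htR hy => ?_⟩
  have hyR : y ∈ closedBall x₀ R :=
    mem_closedBall_iff_norm.2 (hy.trans ((le_mul_of_one_le_left ht.le (by linarith)).trans htR))
  rw [scaledAverage_fderiv_fderiv h.contDiff (contDiff_infty.1 contDiff_quadKernel 2)
    (h.isElliptic_center.kernelPair e).hasCompactSupport_kernel ht.ne']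
  refine (norm_le_norm_add_norm_sub' _ _).trans ((add_le_add
    (h.norm_integral_smul_hess_sub_le hρ ((h.isElliptic y hyR).kernelPair e)
      ((h.isElliptic y hyR).norm_fderiv_fderiv_quadPotential_le hL) hK hgrowth ht hεt htR hy)
    (h.norm_integral_quadKernel_smul_sub_sub_le hL hK hgrowth ht hεt htR hy)).trans_eq ?_)
  ring

lemma exists_norm_scaledAverage_sub_le {k : ℕ} {ρ : ℝ} {φ ψ : E → G} (hρ : 0 ≤ ρ)
    (hφ : KernelPair e (A x₀) k ρ φ ψ) (hk : α + 1 - k ≠ 0) : ∃ C, 0 ≤ C ∧ ∀ K ε, 0 ≤ K →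
    TruncatedGrowth (fderiv ℝ (fderiv ℝ u)) x₀ R K ε → ∀ s r y, 0 < s → ε ≤ s → s ≤ r →
      (1 + ρ) * r ≤ R → ‖y - x₀‖ ≤ s →
        ‖scaledAverage u (fderiv ℝ (fderiv ℝ φ)) (k + 2) r y
            - scaledAverage u (fderiv ℝ (fderiv ℝ φ)) (k + 2) s y‖
          ≤ C * (1 + K) * ((r ^ (α + 1 - k) - s ^ (α + 1 - k)) / (α + 1 - k)) := by
  have hM := h.M_nonneg
  have hψ : ContDiff ℝ 2 ψ := contDiff_infty.1 hφ.contDiff_potential 2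
  obtain ⟨C, hC⟩ := ((hφ.hasCompactSupport_potential.fderiv ℝ).fderiv ℝ).exists_bound_of_continuous
    ((hψ.fderiv_right (m := 1) le_rfl).continuous_fderiv one_ne_zero)
  have hC₀ : 0 ≤ C := (norm_nonneg _).trans (hC 0)
  exact ⟨C * volume.real (closedBall (0 : E) ρ) * M * (1 + ρ) ^ 2 * (1 + Fintype.card ι),
    by positivity, fun K ε hK hgrowth s r y hs hεs hsr hrR hy =>
      h.norm_scaledAverage_sub_scaledAverage_le hρ hφ hC hK hgrowth hk hs hεs hsr hrR hy⟩

lemma exists_norm_deriv_average_sub_le : ∃ C, 0 ≤ C ∧ ∀ K ε, 0 ≤ K →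
    TruncatedGrowth (fderiv ℝ (fderiv ℝ u)) x₀ R K ε → ∀ s r y, 0 < s → ε ≤ s → s ≤ r →
      (1 + Θ / √lam) * r ≤ R → ‖y - x₀‖ ≤ s →
        ‖scaledAverage u (fderiv ℝ (fderiv ℝ (fderiv ℝ (quadKernel (Ring.inverse (A x₀)))))) 3 r y
            - scaledAverage u (fderiv ℝ (fderiv ℝ (fderiv ℝ (quadKernel (Ring.inverse (A x₀))))))
              3 s y‖
          ≤ C * (1 + K) * r ^ α := by
  have hα := h.exponent_mem.1
  have hexp : α + 1 - ((0 + 1 : ℕ) : ℝ) = α := by simp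
  obtain ⟨C, hC, hbound⟩ := h.exists_norm_scaledAverage_sub_le h.isElliptic_center.div_sqrt_nonneg
    (h.isElliptic_center.kernelPair e).succ (hexp.trans_ne hα.ne')
  refine ⟨C / α, by positivity, fun K ε hK hgrowth s r y hs hεs hsr hrR hy =>
    (hbound K ε hK hgrowth s r y hs hεs hsr hrR hy).trans ?_⟩
  rw [hexp]
  calc C * (1 + K) * ((r ^ α - s ^ α) / α) ≤ C * (1 + K) * (r ^ α / α) := by
        gcongr
        exact sub_le_self _ (by positivity)
    _ = C / α * (1 + K) * r ^ α := by ring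

lemma exists_norm_second_average_sub_le : ∃ C, 0 ≤ C ∧ ∀ K ε, 0 ≤ K →
    TruncatedGrowth (fderiv ℝ (fderiv ℝ u)) x₀ R K ε → ∀ s r y, 0 < s → ε ≤ s → s ≤ r →
      (1 + Θ / √lam) * r ≤ R → ‖y - x₀‖ ≤ s →
        ‖scaledAverage u (fderiv ℝ (fderiv ℝ (fderiv ℝ (fderiv ℝ
              (quadKernel (Ring.inverse (A x₀))))))) 4 r y
            - scaledAverage u (fderiv ℝ (fderiv ℝ (fderiv ℝ (fderiv ℝ
              (quadKernel (Ring.inverse (A x₀))))))) 4 s y‖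
          ≤ C * (1 + K) * s ^ (α - 1) := by
  have hα : 0 < 1 - α := sub_pos.2 h.exponent_mem.2
  have hexp : α + 1 - ((0 + 1 + 1 : ℕ) : ℝ) = -(1 - α) := by
    push_cast
    ring
  obtain ⟨C, hC, hbound⟩ := h.exists_norm_scaledAverage_sub_le h.isElliptic_center.div_sqrt_nonneg
    (h.isElliptic_center.kernelPair e).succ.succ (hexp.trans_ne (neg_ne_zero.2 hα.ne'))
  refine ⟨C / (1 - α), by positivity, fun K ε hK hgrowth s r y hs hεs hsr hrR hy =>
    (hbound K ε hK hgrowth s r y hs hεs hsr hrR hy).trans ?_⟩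
  have hr : 0 < r := hs.trans_le hsr
  rw [hexp, show α - 1 = -(1 - α) by ring]
  calc C * (1 + K) * ((r ^ (-(1 - α)) - s ^ (-(1 - α))) / (-(1 - α)))
      = C * (1 + K) * ((s ^ (-(1 - α)) - r ^ (-(1 - α))) / (1 - α)) := by
        rw [div_neg, ← neg_div, neg_sub]
    _ ≤ C * (1 + K) * (s ^ (-(1 - α)) / (1 - α)) := by
        gcongr
        exact sub_le_self _ (by positivity)
    _ = C / (1 - α) * (1 + K) * s ^ (-(1 - α)) := by ring

lemma exists_multiscaleApprox : ∃ W J Q c₀ C T,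
    MultiscaleApprox (fderiv ℝ (fderiv ℝ u)) W J Q x₀ c₀ C α T R := by
  set φ := quadKernel (Ring.inverse (A x₀))
  have hρ := h.isElliptic_center.div_sqrt_nonneg
  have hR := h.radius_mem.1
  have hφ := h.isElliptic_center.kernelPair e
  have hu := h.contDiff.of_le one_le_two
  obtain ⟨C₀, hC₀, hW⟩ := h.exists_norm_average_sub_le
  obtain ⟨C₁, hC₁, hJ⟩ := h.exists_norm_deriv_average_sub_le
  obtain ⟨C₂, hC₂, hQ⟩ := h.exists_norm_second_average_sub_le
  have hscale {t : ℝ} (ht : t ≤ R / (1 + Θ / √lam)) : (1 + Θ / √lam) * t ≤ R :=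
    (le_div_iff₀' (by positivity)).1 ht
  refine ⟨scaledAverage u (fderiv ℝ (fderiv ℝ φ)) 2,
    scaledAverage u (fderiv ℝ (fderiv ℝ (fderiv ℝ φ))) 3,
    scaledAverage u (fderiv ℝ (fderiv ℝ (fderiv ℝ (fderiv ℝ φ)))) 4,
    ∫ z, φ z, C₀ + C₁ + C₂, R / (1 + Θ / √lam),
    { c₀_pos := integral_quadKernel_pos hφ.hasCompactSupport_kernel
      C_nonneg := by positivity
      exponent_mem := h.exponent_mem
      T_pos := by positivity
      T_le := div_le_self hR.le (by linarith)
      continuous := h.continuous_hess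
      apply_center := h.hess_center
      hasFDerivAt_average := fun t y ht => hasFDerivAt_scaledAverage hu
        (contDiff_infty.1 hφ.succ.succ.contDiff_kernel 1)
        hφ.succ.succ.hasCompactSupport_kernel ht.ne' y
      hasFDerivAt_deriv := fun t y ht => hasFDerivAt_scaledAverage hu
        (contDiff_infty.1 hφ.succ.succ.succ.contDiff_kernel 1)
        hφ.succ.succ.succ.hasCompactSupport_kernel ht.ne' y
      continuous_second := fun t ht => continuous_scaledAverage hu
        (contDiff_infty.1 hφ.succ.succ.succ.succ.contDiff_kernel 1)
        hφ.succ.succ.succ.succ.hasCompactSupport_kernel ht.ne'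
      average_sub_le := fun K ε hK _ hgrowth t y ht hεt htT hy =>
        (hW K ε hK hgrowth t y ht hεt (hscale htT) hy).trans (by gcongr; linarith)
      deriv_sub_le := fun K ε hK _ hgrowth s r y hs hεs hsr hrT hy =>
        have hr := hs.trans_le hsr
        (hJ K ε hK hgrowth s r y hs hεs hsr (hscale hrT) hy).trans (by gcongr; linarith)
      second_sub_le := fun K ε hK _ hgrowth s r y hs hεs hsr hrT hy =>
        (hQ K ε hK hgrowth s r y hs hεs hsr (hscale hrT) hy).trans (by gcongr; linarith) }⟩

theorem exists_isBigO_sub : ∃ S : E →L[ℝ] E →L[ℝ] E →L[ℝ] ℝ,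
    (fun y => fderiv ℝ (fderiv ℝ u) y - S (y - x₀)) =O[𝓝 x₀] fun y => ‖y - x₀‖ ^ (1 + α) := by
  obtain ⟨W, J, Q, c₀, C, T, hH⟩ := h.exists_multiscaleApprox
  exact hH.exists_isBigO_sub

end IsNormalizedSolution

end HessianExpansion

section PointwiseHolder

open Asymptotics

variable {E F G H : Type*} [NormedAddCommGroup E] [NormedAddCommGroup F] [NormedSpace ℝ F]
  [NormedAddCommGroup G] [NormedSpace ℝ G] [NormedAddCommGroup H] [NormedSpace ℝ H] {x₀ : E}

lemma isBigO_clm_apply₂_sub {w : E → ℝ} (B : F →L[ℝ] G →L[ℝ] H) {p : E → F} {q : E → G}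
    (hpc : ContinuousAt p x₀) (hp : (fun x => p x - p x₀) =O[𝓝 x₀] w)
    (hq : (fun x => q x - q x₀) =O[𝓝 x₀] w) :
    (fun x => B (p x) (q x) - B (p x₀) (q x₀)) =O[𝓝 x₀] w := by
  have hleft : (fun x => B (p x) (q x - q x₀)) =O[𝓝 x₀] w :=
    (B.isBoundedBilinearMap.isBigO_comp (g := p)).trans <| by
      simpa using (hpc.norm.isBigO_one ℝ).mul hq.norm_left
  have hright : (fun x => B (p x - p x₀) (q x₀)) =O[𝓝 x₀] w :=
    (((B.flip (q x₀)).isBigO_comp _ _).trans hp)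
  refine (hleft.add hright).congr_left fun x => ?_
  simp

variable [NormedSpace ℝ E] {α : ℝ}

lemma exists_contDiff_eventuallyEq [HasContDiffBump E] {n : ℕ} {u : E → F}
    (hu : ContDiffAt ℝ n u x₀) : ∃ v : E → F, ContDiff ℝ n v ∧ v =ᶠ[𝓝 x₀] u := by
  obtain ⟨r, hr, hball⟩ :=
    nhds_basis_closedBall.eventually_iff.1 (hu.eventually (by simp))
  let η : ContDiffBump x₀ := ⟨r / 2, r, half_pos hr, half_lt_self hr⟩
  refine ⟨fun x => η x • u x, contDiff_iff_contDiffAt.2 fun x => ?_, ?_⟩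
  · by_cases hx : x ∈ tsupport η
    · exact η.contDiffAt.smul (hball (η.tsupport_eq ▸ hx))
    · refine (contDiffAt_const (c := (0 : F))).congr_of_eventuallyEq ?_
      filter_upwards [notMem_tsupport_iff_eventuallyEq.1 hx] with y hy
      simp [hy]
  · filter_upwards [η.eventuallyEq_one] with y hy
    simp [hy]

lemma isBigO_sub_rpow_of_differentiableAt {q : E → F} (hα : α ∈ Set.Icc (0 : ℝ) 1)
    (hq : DifferentiableAt ℝ q x₀) :
    (fun x => q x - q x₀) =O[𝓝 x₀] fun x => ‖x - x₀‖ ^ α := by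
  refine hq.isBigO_sub.trans (.of_bound 1 ?_)
  filter_upwards [closedBall_mem_nhds x₀ one_pos] with x hx
  rw [one_mul, Real.norm_of_nonneg (by positivity)]
  simpa only [Real.rpow_one] using Real.rpow_le_rpow_of_exponent_ge' (norm_nonneg (x - x₀))
    (mem_closedBall_iff_norm.1 hx) hα.1 hα.2

omit [NormedSpace ℝ E] [NormedSpace ℝ F] in
lemma isBigO_sub_rpow_of_mem_nhds {g : E → F} {s : Set E} {M : ℝ} (hs : s ∈ 𝓝 x₀)
    (hg : ∀ x ∈ s, ∀ y ∈ s, ‖g x - g y‖ ≤ M * ‖x - y‖ ^ α) :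
    (fun x => g x - g x₀) =O[𝓝 x₀] fun x => ‖x - x₀‖ ^ α := by
  refine .of_bound M ?_
  filter_upwards [hs] with x hx
  rw [Real.norm_of_nonneg (by positivity)]
  exact hg x hx x₀ (mem_of_mem_nhds hs)

omit [NormedSpace ℝ E] in
lemma tendsto_norm_sub_rpow (hα : 0 < α) : Tendsto (fun x => ‖x - x₀‖ ^ α) (𝓝 x₀) (𝓝 0) :=
  Continuous.tendsto' (by fun_prop (disch := simp [hα.le])) _ _ (by simp [hα.ne'])

omit [NormedSpace ℝ E] [NormedSpace ℝ F] in
lemma continuousAt_of_isBigO_rpow {g : E → F} (hα : 0 < α)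
    (hg : (fun x => g x - g x₀) =O[𝓝 x₀] fun x => ‖x - x₀‖ ^ α) : ContinuousAt g x₀ :=
  tendsto_sub_nhds_zero_iff.1 (hg.trans_tendsto (tendsto_norm_sub_rpow hα))

lemma hasFDerivAt_of_isBigO_rpow {p : E → F} {S : E →L[ℝ] F} (hα : 0 < α) (hp : p x₀ = 0)
    (h : (fun x => p x - S (x - x₀)) =O[𝓝 x₀] fun x => ‖x - x₀‖ ^ (1 + α)) :
    HasFDerivAt p S x₀ := by
  have hpow : (fun x => ‖x - x₀‖ ^ α) =o[𝓝 x₀] fun _ => (1 : ℝ) :=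
    (isLittleO_one_iff ℝ).2 (tendsto_norm_sub_rpow hα)
  refine .of_isLittleO ?_
  simp only [hp, sub_zero]
  refine h.trans_isLittleO (IsLittleO.of_norm_right ?_)
  simpa only [Real.rpow_add' (norm_nonneg _) (by positivity : 1 + α ≠ 0), Real.rpow_one, mul_one]
    using (isBigO_refl (fun x => ‖x - x₀‖) (𝓝 x₀)).mul_isLittleO hpow

/-- Pointwise `C^{1,α}` regularity: `p` is differentiable near `x₀`, and its derivative is Hölder
continuous with exponent `α` at the single point `x₀`. -/
structure HasHolderDerivAt (p : E → F) (α : ℝ) (x₀ : E) : Prop where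
  eventually_differentiableAt : ∀ᶠ x in 𝓝 x₀, DifferentiableAt ℝ p x
  isBigO_fderiv_sub : (fun x => fderiv ℝ p x - fderiv ℝ p x₀) =O[𝓝 x₀] fun x => ‖x - x₀‖ ^ α

lemma HasHolderDerivAt.differentiableAt {p : E → F} (hp : HasHolderDerivAt p α x₀) :
    DifferentiableAt ℝ p x₀ :=
  hp.eventually_differentiableAt.self_of_nhds

end PointwiseHolder

section Reduction

set_option maxSynthPendingDepth 3

open Asymptotics

variable {ι E : Type*} [Fintype ι] [NormedAddCommGroup E] [InnerProductSpace ℝ E]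

/-- The right-hand side of `tr (A D²v) = f - b·Dv - c v`, the equation that remains when the lower
order terms are moved to the right. -/
noncomputable def reducedRhs (b : E → E) (c f v : E → ℝ) (x : E) : ℝ :=
  f x - fderiv ℝ v x (b x) - c x * v x

variable {e : OrthonormalBasis ι ℝ E} {A : E → E →L[ℝ] E} {b : E → E} {c f v : E → ℝ} {x₀ : E}
  {lam α : ℝ}

lemma hasFDerivAt_reducedRhs {x : E} (hb : DifferentiableAt ℝ b x) (hc : DifferentiableAt ℝ c x)
    (hf : DifferentiableAt ℝ f x) (hv : ContDiff ℝ 2 v) :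
    HasFDerivAt (reducedRhs b c f v)
      (fderiv ℝ f x - ((fderiv ℝ v x).comp (fderiv ℝ b x) + (fderiv ℝ (fderiv ℝ v) x).flip (b x))
        - (c x • fderiv ℝ v x + v x • fderiv ℝ c x)) x :=
  have hv' : Differentiable ℝ (fderiv ℝ v) := (hv.fderiv_right le_rfl).differentiable one_ne_zero
  (hf.hasFDerivAt.sub ((hv' x).hasFDerivAt.clm_apply hb.hasFDerivAt)).sub
    (hc.hasFDerivAt.mul (hv.differentiable two_ne_zero x).hasFDerivAt)

lemma isBigO_fderiv_reducedRhs_sub (hα : α ∈ Set.Icc (0 : ℝ) 1)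
    (hb : HasHolderDerivAt b α x₀) (hc : HasHolderDerivAt c α x₀) (hf : HasHolderDerivAt f α x₀)
    (hv : ContDiff ℝ 2 v) (hcrit : fderiv ℝ (fderiv ℝ v) x₀ = 0) :
    (fun x => fderiv ℝ (reducedRhs b c f v) x - fderiv ℝ (reducedRhs b c f v) x₀) =O[𝓝 x₀]
      fun x => ‖x - x₀‖ ^ α + ‖fderiv ℝ (fderiv ℝ v) x‖ := by
  have hv₀ : DifferentiableAt ℝ v x₀ := hv.differentiable two_ne_zero x₀
  have hv₁ : DifferentiableAt ℝ (fderiv ℝ v) x₀ :=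
    (hv.fderiv_right (m := 1) le_rfl).differentiable one_ne_zero x₀
  have hHolder : (fun x => ‖x - x₀‖ ^ α) =O[𝓝 x₀]
      fun x => ‖x - x₀‖ ^ α + ‖fderiv ℝ (fderiv ℝ v) x‖ :=
    .of_norm_le fun x => by
      rw [Real.norm_of_nonneg (by positivity)]
      exact le_add_of_nonneg_right (norm_nonneg _)
  have hHess : (fun x => (fderiv ℝ (fderiv ℝ v) x).flip (b x)) =O[𝓝 x₀]
      fun x => ‖x - x₀‖ ^ α + ‖fderiv ℝ (fderiv ℝ v) x‖ := by
    have hmul : (fun x => (fderiv ℝ (fderiv ℝ v) x).flip (b x)) =O[𝓝 x₀]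
        fun x => ‖b x‖ * ‖fderiv ℝ (fderiv ℝ v) x‖ :=
      .of_norm_le fun x => by
        simpa [mul_comm] using (fderiv ℝ (fderiv ℝ v) x).flip.le_opNorm (b x)
    refine hmul.trans (((hb.differentiableAt.continuousAt.norm.isBigO_one ℝ).mul
      (.of_norm_le fun x => ?_)).congr_right fun x => one_mul _)
    rw [norm_norm]
    exact le_add_of_nonneg_left (by positivity)
  have hcomp := isBigO_clm_apply₂_sub (ContinuousLinearMap.compL ℝ E E ℝ) hv₁.continuousAt
    (isBigO_sub_rpow_of_differentiableAt hα hv₁) hb.isBigO_fderiv_sub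
  have hcv := isBigO_clm_apply₂_sub (ContinuousLinearMap.lsmul ℝ ℝ) hc.differentiableAt.continuousAt
    (isBigO_sub_rpow_of_differentiableAt hα hc.differentiableAt)
    (isBigO_sub_rpow_of_differentiableAt hα hv₁)
  have hvc := isBigO_clm_apply₂_sub (ContinuousLinearMap.lsmul ℝ ℝ) hv₀.continuousAt
    (isBigO_sub_rpow_of_differentiableAt hα hv₀) hc.isBigO_fderiv_sub
  refine ((((hf.isBigO_fderiv_sub.sub hcomp).sub (hcv.add hvc)).trans hHolder).sub hHess).congr'
    ?_ .rfl
  filter_upwards [hb.eventually_differentiableAt, hc.eventually_differentiableAt,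
    hf.eventually_differentiableAt] with x hbx hcx hfx
  rw [(hasFDerivAt_reducedRhs hbx hcx hfx hv).fderiv, (hasFDerivAt_reducedRhs hb.differentiableAt
    hc.differentiableAt hf.differentiableAt hv).fderiv, hcrit]
  simp only [ContinuousLinearMap.compL_apply, ContinuousLinearMap.lsmul_apply,
    ContinuousLinearMap.flip_zero, zero_apply]
  abel

lemma eventually_isElliptic (hlam : 0 < lam) (hA : ContinuousAt A x₀)
    (hsymm : ∀ᶠ x in 𝓝 x₀, ∀ ξ η, ⟪A x ξ, η⟫ = ⟪ξ, A x η⟫)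
    (hell : ∀ᶠ x in 𝓝 x₀, ∀ ξ, lam * ‖ξ‖ ^ 2 ≤ ⟪A x ξ, ξ⟫) :
    ∀ᶠ x in 𝓝 x₀, IsElliptic (A x) lam (‖A x₀‖ + 1) := by
  filter_upwards [hsymm, hell, hA.norm.eventually_le_const (lt_add_one _)] with x hx hx' hx''
  exact ⟨hlam, hx, hx', hx''⟩

lemma exists_isNormalizedSolution (hlam : 0 < lam) (hα : α ∈ Set.Ioo (0 : ℝ) 1)
    (hsymm : ∀ᶠ x in 𝓝 x₀, ∀ ξ η, ⟪A x ξ, η⟫ = ⟪ξ, A x η⟫)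
    (hell : ∀ᶠ x in 𝓝 x₀, ∀ ξ, lam * ‖ξ‖ ^ 2 ≤ ⟪A x ξ, ξ⟫)
    (hAH : ∃ U ∈ 𝓝 x₀, ∃ M, ∀ x ∈ U, ∀ y ∈ U, ‖A x - A y‖ ≤ M * ‖x - y‖ ^ α)
    (hb : HasHolderDerivAt b α x₀) (hc : HasHolderDerivAt c α x₀) (hf : HasHolderDerivAt f α x₀)
    (hv : ContDiff ℝ 2 v) (hcrit : fderiv ℝ (fderiv ℝ v) x₀ = 0)
    (hsol : ∀ᶠ x in 𝓝 x₀, traceForm e (A x) (fderiv ℝ (fderiv ℝ v) x) = reducedRhs b c f v x) :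
    ∃ Θ M R, IsNormalizedSolution e A (reducedRhs b c f v) (fderiv ℝ (reducedRhs b c f v)) v x₀
      lam Θ M α R := by
  obtain ⟨U, hU, M₁, hM₁⟩ := hAH
  obtain ⟨M₂, hM₂, hrhs⟩ := (isBigO_fderiv_reducedRhs_sub (Set.Ioo_subset_Icc_self hα)
    hb hc hf hv hcrit).exists_nonneg
  have hA : ContinuousAt A x₀ :=
    continuousAt_of_isBigO_rpow hα.1 (isBigO_sub_rpow_of_mem_nhds hU hM₁)
  obtain ⟨R, hR, hball⟩ := nhds_basis_closedBall.eventually_iff.1 <|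
    (eventually_isElliptic hlam hA hsymm hell).and <| hb.eventually_differentiableAt.and <|
      hc.eventually_differentiableAt.and <| hf.eventually_differentiableAt.and <|
      hsol.and <| hrhs.bound.and hU
  have hsub : closedBall x₀ (min R 1) ⊆ closedBall x₀ R :=
    closedBall_subset_closedBall (min_le_left R 1)
  refine ⟨‖A x₀‖ + 1, max M₁ M₂, min R 1,
    { exponent_mem := hα
      radius_mem := ⟨lt_min hR one_pos, min_le_right R 1⟩
      M_nonneg := hM₂.trans (le_max_right _ _)
      contDiff := hv
      hess_center := hcrit
      isElliptic := fun x hx => (hball (hsub hx)).1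
      norm_coeff_sub_le := fun x hx y hy => ?_
      equation := fun x hx => (hball (hsub hx)).2.2.2.2.1
      hasFDerivAt_rhs := fun x hx => ?_
      norm_rhs_deriv_sub_le := fun x hx => ?_ }⟩
  · refine (hM₁ x (hball (hsub hx)).2.2.2.2.2.2 y (hball (hsub hy)).2.2.2.2.2.2).trans ?_
    gcongr
    exact le_max_left _ _
  · obtain ⟨-, hbx, hcx, hfx, -⟩ := hball (hsub hx)
    exact (hasFDerivAt_reducedRhs hbx hcx hfx hv).differentiableAt.hasFDerivAt
  · refine (hball (hsub hx)).2.2.2.2.2.1.trans ?_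
    rw [Real.norm_of_nonneg (by positivity)]
    gcongr
    exact le_max_right _ _

end Reduction

section PointwiseRegularity

set_option maxSynthPendingDepth 3

open Asymptotics

variable {d : ℕ} {x₀ : Euc d}

lemma HolderOnE.hasHolderDerivAt {F : Type*} [NormedAddCommGroup F] [NormedSpace ℝ F]
    {p : Euc d → F} {α : ℝ} {s : Set (Euc d)} (h : HolderOnE (fun x => fderiv ℝ p x) α s)
    (hp : DifferentiableOn ℝ p s) (hs : s ∈ 𝓝 x₀) : HasHolderDerivAt p α x₀ where
  eventually_differentiableAt := hp.eventually_differentiableAt hs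
  isBigO_fderiv_sub :=
    let ⟨_, hM⟩ := h
    isBigO_sub_rpow_of_mem_nhds hs hM

lemma inner_gradient_eq_fderiv (u : Euc d → ℝ) (x y : Euc d) :
    ⟪y, gradient u x⟫ = fderiv ℝ u x y := by
  rw [real_inner_comm, gradient, InnerProductSpace.toDual_symm_apply]

theorem stmt3_general {lam α : ℝ} {A : Euc d → Euc d →L[ℝ] Euc d} {b : Euc d → Euc d}
    {c f u : Euc d → ℝ} (hlam : 0 < lam) (hα : α ∈ Set.Ioo (0 : ℝ) 1)
    (hAsymm : ∀ᶠ x in 𝓝 x₀, ∀ ξ η : Euc d, ⟪A x ξ, η⟫ = ⟪ξ, A x η⟫)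
    (hell : ∀ᶠ x in 𝓝 x₀, ∀ ξ : Euc d, lam * ‖ξ‖ ^ 2 ≤ ⟪A x ξ, ξ⟫)
    (hAH : ∃ U ∈ 𝓝 x₀, HolderOnE A α U)
    (hb : HasHolderDerivAt b α x₀) (hc : HasHolderDerivAt c α x₀) (hf : HasHolderDerivAt f α x₀)
    (hu : ContDiffAt ℝ 2 u x₀)
    (hsol : ∀ᶠ x in 𝓝 x₀,
      (∑ i : Fin d, hess u x (A x (EuclideanSpace.single i 1)) (EuclideanSpace.single i 1))
        + ⟪b x, gradient u x⟫ + c x * u x = f x)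
    (hcrit : hess u x₀ = 0) :
    DifferentiableAt ℝ (fun y => hess u y) x₀ ∧
    ∃ C : ℝ, 0 < C ∧ ∃ δ : ℝ, 0 < δ ∧
      ∀ x : Euc d, ‖x - x₀‖ < δ →
        ‖hess u x - fderiv ℝ (fun y => hess u y) x₀ (x - x₀)‖ ≤ C * ‖x - x₀‖ ^ (1 + α) := by
  obtain ⟨v, hv, hvu⟩ := exists_contDiff_eventuallyEq (n := 2) (mod_cast hu)
  have hgrad : fderiv ℝ v =ᶠ[𝓝 x₀] fderiv ℝ u := hvu.fderiv
  have hhess : hess u =ᶠ[𝓝 x₀] fderiv ℝ (fderiv ℝ v) := hgrad.symm.fderiv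
  have heq : ∀ᶠ x in 𝓝 x₀, traceForm (EuclideanSpace.basisFun (Fin d) ℝ) (A x)
      (fderiv ℝ (fderiv ℝ v) x) = reducedRhs b c f v x := by
    filter_upwards [hsol, hvu, hgrad, hhess] with x hx hvx hdvx hhx
    rw [inner_gradient_eq_fderiv, hhx, ← hvx, ← hdvx] at hx
    rw [traceForm_apply, reducedRhs, ← hx]
    simp only [EuclideanSpace.basisFun_apply]
    ring
  obtain ⟨Θ, M, R, h⟩ := exists_isNormalizedSolution hlam hα hAsymm hell hAH hb hc hf hv
    (hhess.eq_of_nhds.symm.trans hcrit) heq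
  obtain ⟨S, hS⟩ := h.exists_isBigO_sub
  replace hS : (fun x => hess u x - S (x - x₀)) =O[𝓝 x₀] fun x => ‖x - x₀‖ ^ (1 + α) :=
    hS.congr' (hhess.symm.sub .rfl) .rfl
  have hD : HasFDerivAt (fun y => hess u y) S x₀ := hasFDerivAt_of_isBigO_rpow hα.1 hcrit hS
  obtain ⟨C, hC, hbound⟩ := hS.exists_pos
  obtain ⟨δ, hδ, hball⟩ := nhds_basis_ball.eventually_iff.1 hbound.bound
  refine ⟨hD.differentiableAt, C, hC, δ, hδ, fun x hx => ?_⟩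
  simpa only [hD.fderiv, Real.norm_of_nonneg (Real.rpow_nonneg (norm_nonneg (x - x₀)) (1 + α))]
    using hball (mem_ball_iff_norm.2 hx)

end PointwiseRegularity

/-- `C^{3,α}` regularity at Hessian-vanishing points for non-divergence form
equations with `A ∈ C^α` and `b, c, f ∈ C^{1,α}`. -/
theorem stmt3 {d : ℕ} (hd : 2 ≤ d) (Ω : Set (Euc d)) (hΩo : IsOpen Ω) (hΩc : IsConnected Ω)
    (lam Lam : ℝ) (hlam : 0 < lam) (hLamlam : lam ≤ Lam)
    (α : ℝ) (hα : α ∈ Set.Ioo (0 : ℝ) 1)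
    (A : Euc d → Euc d →L[ℝ] Euc d) (b : Euc d → Euc d) (c f : Euc d → ℝ)
    (hAsymm : ∀ x ∈ Ω, ∀ ξ η : Euc d, ⟪A x ξ, η⟫ = ⟪ξ, A x η⟫)
    (hell : ∀ x ∈ Ω, ∀ ξ : Euc d, lam * ‖ξ‖ ^ 2 ≤ ⟪A x ξ, ξ⟫ ∧ ⟪A x ξ, ξ⟫ ≤ Lam * ‖ξ‖ ^ 2)
    (hAH : HolderOnE A α Ω)
    (hbdiff : DifferentiableOn ℝ b Ω) (hbH : HolderOnE (fun x => fderiv ℝ b x) α Ω)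
    (hcdiff : DifferentiableOn ℝ c Ω) (hcH : HolderOnE (fun x => fderiv ℝ c x) α Ω)
    (hfdiff : DifferentiableOn ℝ f Ω) (hfH : HolderOnE (fun x => fderiv ℝ f x) α Ω)
    (u : Euc d → ℝ) (hu : ContDiffOn ℝ 2 u Ω)
    (hsol : ∀ x ∈ Ω,
      (∑ i : Fin d, hess u x (A x (EuclideanSpace.single i 1)) (EuclideanSpace.single i 1))
        + ⟪b x, gradient u x⟫ + c x * u x = f x)
    (x₀ : Euc d) (hx₀ : x₀ ∈ Ω) (hcrit : hess u x₀ = 0) :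
    DifferentiableAt ℝ (fun y => hess u y) x₀ ∧
    ∃ C : ℝ, 0 < C ∧ ∃ δ : ℝ, 0 < δ ∧
      ∀ x : Euc d, ‖x - x₀‖ < δ →
        ‖hess u x - fderiv ℝ (fun y => hess u y) x₀ (x - x₀)‖ ≤ C * ‖x - x₀‖ ^ (1 + α) := by
  have hΩ : Ω ∈ 𝓝 x₀ := hΩo.mem_nhds hx₀
  exact stmt3_general hlam hα (mem_of_superset hΩ hAsymm)
    (mem_of_superset hΩ fun x hx ξ => (hell x hx ξ).1) ⟨Ω, hΩ, hAH⟩ (hbH.hasHolderDerivAt hbdiff hΩ)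
    (hcH.hasHolderDerivAt hcdiff hΩ) (hfH.hasHolderDerivAt hfdiff hΩ) (hu.contDiffAt hΩ)
    (mem_of_superset hΩ hsol) hcrit
end

section
/- There exists a constant c(d) > 0, depending only on the dimension d, such that for every symmetric d×d real matrix S and every r > 0, ⨍_{B_r(0)} |Sx|^{1/2} dx ≥ c(d) (r |S|)^{1/2}, where |S| := sup_{|ξ|=1} |Sξ·ξ| is the operator norm of S. -/
open MeasureTheory Metric Filter
open scoped RealInnerProductSpace ENNReal Topology

/-!
A vector `e` with `‖e‖ ≤ 1` and `‖S e‖ ≥ ‖S‖ / 2`, rescaled by `r / 2`, is the centre of a ball of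
radius `r / 8` that lies in `B_r(0)` and on which `‖S x‖ ≥ r ‖S‖ / 8`. This ball occupies the
fraction `8⁻ⁿ` of `B_r(0)`, `n` being the dimension, and on the rest of `B_r(0)` the integrand is
nonnegative.
-/

theorem exists_norm_le_one_half_opNorm_le {𝕜 E F : Type*} [DenselyNormedField 𝕜]
    [NormedAddCommGroup E] [NormedSpace 𝕜 E] [SeminormedAddCommGroup F] [NormedSpace 𝕜 F]
    (S : E →L[𝕜] F) :
    ∃ e : E, ‖e‖ ≤ 1 ∧ ‖S‖ / 2 ≤ ‖S e‖ := by
  rcases (norm_nonneg S).eq_or_lt with hS | hS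
  · exact ⟨0, by simp, by simp [← hS]⟩
  · obtain ⟨e, he, hSe⟩ := S.exists_lt_apply_of_lt_opNorm (half_lt_self hS)
    exact ⟨e, he.le, hSe.le⟩

theorem norm_apply_sub_opNorm_mul_le_of_mem_ball {𝕜 E F : Type*} [NontriviallyNormedField 𝕜]
    [SeminormedAddCommGroup E] [NormedSpace 𝕜 E] [SeminormedAddCommGroup F] [NormedSpace 𝕜 F]
    (S : E →L[𝕜] F) {x z : E} {ρ : ℝ} (hx : x ∈ ball z ρ) :
    ‖S z‖ - ‖S‖ * ρ ≤ ‖S x‖ := by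
  have hosc : ‖S z‖ - ‖S x‖ ≤ ‖S‖ * ρ :=
    calc ‖S z‖ - ‖S x‖ ≤ ‖S z - S x‖ := norm_sub_norm_le _ _
      _ = ‖S (z - x)‖ := by rw [map_sub]
      _ ≤ ‖S‖ * ρ := S.le_opNorm_of_le (mem_ball_iff_norm'.mp hx).le
  linarith

theorem exists_ball_subset_ball_forall_le_norm_apply {E F : Type*} [NormedAddCommGroup E]
    [NormedSpace ℝ E] [SeminormedAddCommGroup F] [NormedSpace ℝ F] (S : E →L[ℝ] F) {r : ℝ}
    (hr : 0 ≤ r) :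
    ∃ z : E, ball z (r / 8) ⊆ ball 0 r ∧ ∀ x ∈ ball z (r / 8), r * ‖S‖ / 8 ≤ ‖S x‖ := by
  obtain ⟨e, he, hSe⟩ := exists_norm_le_one_half_opNorm_le S
  refine ⟨(r / 2) • e, ball_subset_ball' ?_, fun x hx => ?_⟩
  · have hz : ‖(r / 2) • e‖ ≤ r / 2 := by
      rw [norm_smul_of_nonneg (by positivity)]
      exact mul_le_of_le_one_right (by positivity) he
    rw [dist_zero_right]
    linarith
  · have hSz : r / 2 * (‖S‖ / 2) ≤ ‖S ((r / 2) • e)‖ := by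
      rw [map_smul, norm_smul_of_nonneg (by positivity)]
      gcongr
    linarith [norm_apply_sub_opNorm_mul_le_of_mem_ball S hx]

theorem measureReal_div_mul_le_setAverage {α : Type*} [MeasurableSpace α] {μ : Measure α}
    {s t : Set α} {f : α → ℝ} {m : ℝ} (ht : MeasurableSet t) (hμt : μ t ≠ ∞) (hts : t ⊆ s)
    (hf : IntegrableOn f s μ) (hf₀ : 0 ≤ᵐ[μ.restrict s] f) (hm : ∀ x ∈ t, m ≤ f x) :
    μ.real t / μ.real s * m ≤ ⨍ x in s, f x ∂μ := by
  have hint : m * μ.real t ≤ ∫ x in s, f x ∂μ :=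
    (setIntegral_ge_of_const_le_real ht hμt hm (hf.mono_set hts)).trans
      (setIntegral_mono_set hf hf₀ hts.eventuallyLE)
  calc μ.real t / μ.real s * m = (μ.real s)⁻¹ * (m * μ.real t) := by ring
    _ ≤ (μ.real s)⁻¹ * ∫ x in s, f x ∂μ := by gcongr
    _ = ⨍ x in s, f x ∂μ := by rw [setAverage_eq, smul_eq_mul]

section Average

variable {E F : Type*} [NormedAddCommGroup E] [NormedSpace ℝ E] [FiniteDimensional ℝ E]
  [MeasurableSpace E] [BorelSpace E] [SeminormedAddCommGroup F] [NormedSpace ℝ F]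
  (μ : Measure E) [μ.IsAddHaarMeasure]

theorem addHaar_real_ball_mul_div_ball (x y : E) {a r : ℝ} (ha : 0 < a) (hr : 0 < r) :
    μ.real (ball x (a * r)) / μ.real (ball y r) = a ^ Module.finrank ℝ E := by
  have hball : μ.real (ball y r) ≠ 0 :=
    (ENNReal.toReal_pos (measure_ball_pos μ y hr).ne' measure_ball_lt_top.ne).ne'
  rw [div_eq_iff hball, Measure.addHaar_real_ball_center μ y, measureReal_def,
    Measure.addHaar_ball_mul_of_pos μ x ha, ENNReal.toReal_mul,
    ENNReal.toReal_ofReal (by positivity), measureReal_def]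

theorem integrableOn_ball_norm_apply_rpow (S : E →L[ℝ] F) {p : ℝ} (hp : 0 ≤ p) (z : E) (r : ℝ) :
    IntegrableOn (fun x => ‖S x‖ ^ p) (ball z r) μ := by
  have hcont : Continuous fun x => ‖S x‖ ^ p := S.continuous.norm.rpow_const fun _ => Or.inr hp
  exact (hcont.continuousOn.integrableOn_compact (isCompact_closedBall z r)).mono_set
    ball_subset_closedBall

theorem stmt13_general (S : E →L[ℝ] F) {p r : ℝ} (hp : 0 ≤ p) (hr : 0 < r) :
    (1 / 8) ^ (Module.finrank ℝ E + p) * (r * ‖S‖) ^ p ≤ ⨍ x in ball 0 r, ‖S x‖ ^ p ∂μ := by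
  obtain ⟨z, hsub, hlow⟩ := exists_ball_subset_ball_forall_le_norm_apply S hr.le
  calc (1 / 8) ^ (Module.finrank ℝ E + p) * (r * ‖S‖) ^ p
      = (1 / 8) ^ Module.finrank ℝ E * (r * ‖S‖ / 8) ^ p := by
        rw [Real.rpow_add (by norm_num), Real.rpow_natCast, mul_assoc,
          ← Real.mul_rpow (by norm_num) (by positivity), one_div_mul_eq_div]
    _ = μ.real (ball z (r / 8)) / μ.real (ball 0 r) * (r * ‖S‖ / 8) ^ p := by
        rw [← addHaar_real_ball_mul_div_ball μ z 0 (by norm_num) hr, one_div_mul_eq_div]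
    _ ≤ ⨍ x in ball 0 r, ‖S x‖ ^ p ∂μ :=
        measureReal_div_mul_le_setAverage measurableSet_ball measure_ball_lt_top.ne hsub
          (integrableOn_ball_norm_apply_rpow μ S hp 0 r)
          (Eventually.of_forall fun x => by positivity)
          fun x hx => Real.rpow_le_rpow (by positivity) (hlow x hx) hp

end Average

/-- lower bound for the averaged square root of `|Sx|` over a ball,
for symmetric matrices `S`. -/
theorem stmt13 (d : ℕ) :
    ∃ c : ℝ, 0 < c ∧
      ∀ S : Euc d →L[ℝ] Euc d, (∀ ξ η : Euc d, ⟪S ξ, η⟫ = ⟪ξ, S η⟫) →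
      ∀ r : ℝ, 0 < r →
        c * Real.sqrt (r * ‖S‖) ≤ ⨍ x in ball (0 : Euc d) r, Real.sqrt ‖S x‖ :=
  ⟨(1 / 8) ^ (d + 1 / 2 : ℝ), by positivity, fun S _ r hr => by
    simpa [Real.sqrt_eq_rpow] using stmt13_general volume S (p := 1 / 2) (by norm_num) hr⟩
end

section
/- There exists a constant c(d) > 0, depending only on the dimension d, such that for every symmetric (0,3)-tensor 𝒮 on ℝ^d and every r > 0, ⨍_{B_r(0)} |⟨𝒮,x⟩|^{1/2} dx ≥ c(d) (r |𝒮|)^{1/2}, where ⟨𝒮,x⟩ denotes the d×d symmetric matrix with entries (⟨𝒮,x⟩)_{i,j} = x_k 𝒮^{i,j,k}, |⟨𝒮,x⟩| is its operator norm, and |𝒮| := sup_{|ξ|=1} |𝒮(ξ,ξ,ξ)|. -/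
open MeasureTheory Metric Filter
open scoped RealInnerProductSpace ENNReal Topology

/-!
A nonnegative subadditive function `f` satisfies `f h ≤ f x + f (h - x)`. Averaging over a ball
centred at `h / 2`, which the reflection `x ↦ h - x` preserves, gives `f h ≤ 2 ⨍ f`. If `‖h‖ ≤ r`,
the ball of radius `r / 2` about `h / 2` lies in `B_r(0)` and fills the fraction `2⁻ᵈ` of it, so
`f h ≤ 2 ^ (d + 1) ⨍_{B_r(0)} f`. The function `x ↦ ‖T x‖ ^ p` is subadditive for `0 ≤ p ≤ 1` and
every linear `T`; it remains to take for `h` a maximum point of `‖T ·‖` on the closed ball.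
-/

section SetAverage

variable {G : Type*} [MeasurableSpace G] {μ : Measure G} {s t : Set G} {f : G → ℝ}

theorem measureReal_mul_setAverage_mono_set (hst : s ⊆ t) (ht : μ t ≠ ∞)
    (hf₀ : 0 ≤ᵐ[μ.restrict t] f) (hf : IntegrableOn f t μ) :
    μ.real s * ⨍ x in s, f x ∂μ ≤ μ.real t * ⨍ x in t, f x ∂μ := by
  simp only [← smul_eq_mul, measure_smul_setAverage f ht,
    measure_smul_setAverage f (measure_ne_top_of_subset hst ht)]
  exact setIntegral_mono_set hf hf₀ hst.eventuallyLE

variable [AddCommGroup G] [MeasurableAdd G] [MeasurableNeg G] [μ.IsAddLeftInvariant]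
  [μ.IsNegInvariant]

theorem le_two_mul_setAverage_of_subadditive (hadd : ∀ x y, f (x + y) ≤ f x + f y) {h : G}
    (hs : (h - ·) ⁻¹' s = s) (hs₀ : μ s ≠ 0) (hs_top : μ s ≠ ∞) (hf : IntegrableOn f s μ) :
    f h ≤ 2 * ⨍ x in s, f x ∂μ := by
  have hreflect : MeasurePreserving (h - ·) μ μ := μ.measurePreserving_sub_left h
  have hemb : MeasurableEmbedding (h - ·) := (MeasurableEquiv.subLeft h).measurableEmbedding
  have hf_reflect : IntegrableOn (fun x ↦ f (h - x)) s μ := by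
    have hpre := (hreflect.integrableOn_comp_preimage hemb).2 hf
    rwa [hs] at hpre
  have hintegral : ∫ x in s, f (h - x) ∂μ = ∫ x in s, f x ∂μ := by
    simpa only [hs] using hreflect.setIntegral_preimage_emb hemb f s
  obtain ⟨x, -, hx⟩ := exists_le_setAverage hs₀ hs_top (hf.add hf_reflect)
  calc
    f h = f (x + (h - x)) := by rw [add_sub_cancel]
    _ ≤ f x + f (h - x) := hadd x (h - x)
    _ ≤ ⨍ x in s, (f x + f (h - x)) ∂μ := hx
    _ = 2 * ⨍ x in s, f x ∂μ := by
      simp only [setAverage_eq, integral_add hf hf_reflect, hintegral, smul_eq_mul]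
      ring

end SetAverage

section Ball

theorem preimage_add_self_sub_ball {E : Type*} [SeminormedAddCommGroup E] (a : E) (ρ : ℝ) :
    (a + a - ·) ⁻¹' ball a ρ = ball a ρ := by
  ext x
  rw [Set.mem_preimage, mem_ball, mem_ball, dist_eq_norm, dist_eq_norm', add_sub_right_comm,
    add_sub_cancel_right]

variable {E : Type*} [NormedAddCommGroup E] [NormedSpace ℝ E] [FiniteDimensional ℝ E]
  [MeasurableSpace E] [BorelSpace E] {μ : Measure E} [μ.IsAddHaarMeasure] {f : E → ℝ}

theorem setAverage_ball_le_of_ball_subset {a b : E} {ρ R : ℝ} (hρ : 0 < ρ)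
    (hsub : ball a ρ ⊆ ball b R) (hf₀ : 0 ≤ᵐ[μ.restrict (ball b R)] f)
    (hf : IntegrableOn f (ball b R) μ) :
    ⨍ x in ball a ρ, f x ∂μ ≤
      (R / ρ) ^ Module.finrank ℝ E * ⨍ x in ball b R, f x ∂μ := by
  have hR : 0 < R := pos_of_mem_ball (hsub (mem_ball_self hρ))
  have hpos : 0 < μ.real (ball a ρ) := ENNReal.toReal_pos (measure_ball_pos μ a hρ).ne'
    measure_ball_lt_top.ne
  have hvol : μ.real (ball b R) = (R / ρ) ^ Module.finrank ℝ E * μ.real (ball a ρ) := by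
    have hscale := Measure.addHaar_ball_mul_of_pos μ b (div_pos hR hρ) ρ
    rw [div_mul_cancel₀ R hρ.ne', ← Measure.addHaar_ball_center μ a] at hscale
    rw [measureReal_def, hscale, ENNReal.toReal_mul, ENNReal.toReal_ofReal (by positivity),
      measureReal_def]
  refine le_of_mul_le_mul_left ?_ hpos
  calc
    μ.real (ball a ρ) * ⨍ x in ball a ρ, f x ∂μ
      ≤ μ.real (ball b R) * ⨍ x in ball b R, f x ∂μ :=
        measureReal_mul_setAverage_mono_set hsub measure_ball_lt_top.ne hf₀ hf
    _ = μ.real (ball a ρ) * ((R / ρ) ^ Module.finrank ℝ E * ⨍ x in ball b R, f x ∂μ) := by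
        rw [hvol]; ring

theorem le_two_pow_mul_setAverage_ball_of_subadditive (hadd : ∀ x y, f (x + y) ≤ f x + f y)
    (hf₀ : ∀ x, 0 ≤ f x) {h : E} {r : ℝ} (hr : 0 < r) (hh : ‖h‖ ≤ r)
    (hf : IntegrableOn f (ball 0 r) μ) :
    f h ≤ 2 ^ (Module.finrank ℝ E + 1) * ⨍ x in ball 0 r, f x ∂μ := by
  set a : E := (2⁻¹ : ℝ) • h with ha
  have haa : a + a = h := by rw [ha, ← add_smul]; norm_num
  have hsub : ball a (r / 2) ⊆ ball 0 r := by
    refine ball_subset_ball' ?_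
    rw [dist_zero_right, ha, norm_smul, Real.norm_of_nonneg (by norm_num)]
    linarith
  calc
    f h ≤ 2 * ⨍ x in ball a (r / 2), f x ∂μ :=
      le_two_mul_setAverage_of_subadditive hadd (haa ▸ preimage_add_self_sub_ball a _)
        (measure_ball_pos μ a (half_pos hr)).ne' measure_ball_lt_top.ne (hf.mono_set hsub)
    _ ≤ 2 * ((r / (r / 2)) ^ Module.finrank ℝ E * ⨍ x in ball 0 r, f x ∂μ) := by
      gcongr
      exact setAverage_ball_le_of_ball_subset (half_pos hr) hsub (.of_forall hf₀) hf
    _ = 2 ^ (Module.finrank ℝ E + 1) * ⨍ x in ball 0 r, f x ∂μ := by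
      rw [div_div_cancel₀ hr.ne']
      ring

end Ball

section OperatorNorm

theorem norm_rpow_add_le {F : Type*} [SeminormedAddGroup F] {p : ℝ} (hp₀ : 0 ≤ p) (hp₁ : p ≤ 1)
    (x y : F) : ‖x + y‖ ^ p ≤ ‖x‖ ^ p + ‖y‖ ^ p :=
  (Real.rpow_le_rpow (norm_nonneg _) (norm_add_le x y) hp₀).trans
    (Real.rpow_add_le_add_rpow (norm_nonneg x) (norm_nonneg y) hp₀ hp₁)

variable {E F : Type*} [NormedAddCommGroup E] [NormedSpace ℝ E] [FiniteDimensional ℝ E]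
  [SeminormedAddCommGroup F] [NormedSpace ℝ F]

theorem exists_norm_le_and_mul_opNorm_le (T : E →L[ℝ] F) {r : ℝ} (hr : 0 < r) :
    ∃ h : E, ‖h‖ ≤ r ∧ r * ‖T‖ ≤ ‖T h‖ := by
  obtain ⟨h, hh, hmax⟩ := (isCompact_closedBall (0 : E) r).exists_isMaxOn
    (nonempty_closedBall.2 hr.le) T.continuous.norm.continuousOn
  refine ⟨h, mem_closedBall_zero_iff.1 hh, (le_div_iff₀' hr).1 ?_⟩
  refine T.opNorm_le_of_unit_norm (by positivity) fun x hx ↦ (le_div_iff₀' hr).2 ?_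
  have hrx : ‖T (r • x)‖ ≤ ‖T h‖ :=
    hmax (by rw [mem_closedBall_zero_iff, norm_smul, hx, mul_one, Real.norm_of_nonneg hr.le])
  rwa [map_smul, norm_smul, Real.norm_of_nonneg hr.le] at hrx

theorem stmt14_general [MeasurableSpace E] [BorelSpace E] (μ : Measure E) [μ.IsAddHaarMeasure]
    (T : E →L[ℝ] F) {p : ℝ} (hp₀ : 0 ≤ p) (hp₁ : p ≤ 1) {r : ℝ} (hr : 0 < r) :
    (r * ‖T‖) ^ p ≤ 2 ^ (Module.finrank ℝ E + 1) * ⨍ x in ball 0 r, ‖T x‖ ^ p ∂μ := by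
  obtain ⟨h, hh, hTh⟩ := exists_norm_le_and_mul_opNorm_le T hr
  have hcont : Continuous fun x ↦ ‖T x‖ ^ p := T.continuous.norm.rpow_const fun _ ↦ .inr hp₀
  have hadd (x y : E) : ‖T (x + y)‖ ^ p ≤ ‖T x‖ ^ p + ‖T y‖ ^ p := by
    rw [map_add]
    exact norm_rpow_add_le hp₀ hp₁ (T x) (T y)
  calc
    (r * ‖T‖) ^ p ≤ ‖T h‖ ^ p := by gcongr
    _ ≤ 2 ^ (Module.finrank ℝ E + 1) * ⨍ x in ball 0 r, ‖T x‖ ^ p ∂μ :=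
      le_two_pow_mul_setAverage_ball_of_subadditive hadd (fun x ↦ by positivity) hr hh
        ((hcont.continuousOn.integrableOn_compact (isCompact_closedBall 0 r)).mono_set
          ball_subset_closedBall)

end OperatorNorm

-- Instance search does not find the operator norm of trilinear maps at the default depth.
set_option maxSynthPendingDepth 2 in
theorem tnorm_le_opNorm {d : ℕ} (S : Euc d →L[ℝ] Euc d →L[ℝ] Euc d →L[ℝ] ℝ) :
    tnorm S ≤ ‖S‖ := by
  refine Real.iSup_le (fun ξ ↦ ?_) (norm_nonneg S)
  have hξ : ‖ξ.1‖ = 1 := norm_eq_of_mem_sphere ξ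
  calc
    |S ξ.1 ξ.1 ξ.1| ≤ ‖S ξ.1‖ := by simpa [hξ] using (S ξ.1).le_opNorm₂ ξ.1 ξ.1
    _ ≤ ‖S‖ := by simpa [hξ] using S.le_opNorm ξ.1

/-- lower bound for the averaged square root of `|⟨𝒮,x⟩|` over a ball,
for symmetric (0,3)-tensors `𝒮`. -/
theorem stmt14 (d : ℕ) :
    ∃ c : ℝ, 0 < c ∧
      ∀ S : Euc d →L[ℝ] Euc d →L[ℝ] Euc d →L[ℝ] ℝ, Sym3 S →
      ∀ r : ℝ, 0 < r →
        c * Real.sqrt (r * tnorm S) ≤ ⨍ x in ball (0 : Euc d) r, Real.sqrt ‖S x‖ := by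
  refine ⟨(2 ^ (d + 1))⁻¹, by positivity, fun S _ r hr ↦ (inv_mul_le_iff₀ (by positivity)).2 ?_⟩
  set_option maxSynthPendingDepth 2 in
  calc
    √(r * tnorm S) ≤ √(r * ‖S‖) := by gcongr; exact tnorm_le_opNorm S
    _ ≤ 2 ^ (d + 1) * ⨍ x in ball (0 : Euc d) r, √‖S x‖ := by
      simpa only [Real.sqrt_eq_rpow, finrank_euclideanSpace_fin] using
        stmt14_general volume S one_half_pos.le one_half_lt_one.le hr
end

section
/- There exists a constant C(d) > 0, depending only on the dimension d, such that for every symmetric d×d real matrix S, every vector p ∈ ℝ^d and every r > 0, |p| ≤ C(d) ( ⨍_{B_r(0)} |Sx + p|^{1/2} dx )². -/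
open MeasureTheory Metric Filter
open scoped RealInnerProductSpace ENNReal Topology

/-!
Adding the values of `x ↦ f x + p` at `x` and `-x` removes an odd `f` and leaves `2p`. As
`t ↦ t ^ q` is subadditive for `q ≤ 1`, this gives
`(2‖p‖) ^ q ≤ ‖f x + p‖ ^ q + ‖f (-x) + p‖ ^ q` at every point; averaging over a symmetric measure
makes the two terms on the right contribute equally.
-/

section Pointwise

variable {F : Type*} [NormedAddCommGroup F] [NormedSpace ℝ F]

theorem two_mul_norm_le_norm_add_add_norm_neg_add (v p : F) :
    2 * ‖p‖ ≤ ‖v + p‖ + ‖-v + p‖ :=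
  calc 2 * ‖p‖ = ‖(2 : ℝ) • p‖ := by rw [norm_smul, Real.norm_two]
    _ = ‖(v + p) + (-v + p)‖ := by rw [two_smul]; abel_nf
    _ ≤ ‖v + p‖ + ‖-v + p‖ := norm_add_le _ _

theorem two_mul_norm_rpow_le_norm_add_rpow_add_norm_neg_add_rpow {q : ℝ} (hq₀ : 0 ≤ q)
    (hq₁ : q ≤ 1) (v p : F) : (2 * ‖p‖) ^ q ≤ ‖v + p‖ ^ q + ‖-v + p‖ ^ q :=
  calc (2 * ‖p‖) ^ q ≤ (‖v + p‖ + ‖-v + p‖) ^ q :=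
        Real.rpow_le_rpow (by positivity) (two_mul_norm_le_norm_add_add_norm_neg_add v p) hq₀
    _ ≤ ‖v + p‖ ^ q + ‖-v + p‖ ^ q :=
        Real.rpow_add_le_add_rpow (norm_nonneg _) (norm_nonneg _) hq₀ hq₁

end Pointwise

theorem le_two_rpow_mul_rpow_inv_of_two_mul_rpow_le {a b q : ℝ} (ha : 0 ≤ a) (hb : 0 ≤ b)
    (hq : 0 < q) (h : (2 * a) ^ q ≤ 2 * b) : a ≤ 2 ^ (q⁻¹ - 1) * b ^ q⁻¹ := by
  have two_mul_le : 2 * a ≤ 2 ^ q⁻¹ * b ^ q⁻¹ := by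
    rw [← Real.mul_rpow zero_le_two hb]
    exact (Real.le_rpow_inv_iff_of_pos (by positivity) (by positivity) hq).2 h
  rw [Real.rpow_sub_one two_ne_zero]
  linarith

theorem isNegInvariant_restrict {E : Type*} [InvolutiveNeg E] [MeasurableSpace E]
    [MeasurableNeg E] {μ : Measure E} [μ.IsNegInvariant] {s : Set E} (hs : -s = s) :
    (μ.restrict s).IsNegInvariant where
  neg_eq_self := by
    have hpres := (Measure.measurePreserving_neg μ).restrict_preimage_emb
      (MeasurableEquiv.neg E).measurableEmbedding s
    rw [Set.neg_preimage, hs] at hpres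
    exact hpres.map_eq

section NegInvariant

variable {E : Type*} [AddGroup E] [MeasurableSpace E] [MeasurableNeg E]
  {μ : Measure E} [μ.IsNegInvariant] [IsFiniteMeasure μ] [NeZero μ]

theorem le_two_mul_average_of_forall_le_add_comp_neg {φ : E → ℝ} {c : ℝ} (hφ : Integrable φ μ)
    (hc : ∀ x, c ≤ φ x + φ (-x)) : c ≤ 2 * ⨍ x, φ x ∂μ :=
  calc c = ⨍ _, c ∂μ := (average_const μ c).symm
    _ ≤ ⨍ x, (φ x + φ (-x)) ∂μ :=
        integral_mono (integrable_const c).to_average (hφ.add hφ.comp_neg).to_average hc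
    _ = 2 * ⨍ x, φ x ∂μ := by
        rw [average_eq, average_eq, integral_add hφ hφ.comp_neg, integral_neg_eq_self φ μ,
          ← two_mul, smul_eq_mul, smul_eq_mul, mul_left_comm]

theorem norm_le_two_rpow_mul_average_norm_odd_add_rpow {F : Type*} [NormedAddCommGroup F]
    [NormedSpace ℝ F] {q : ℝ} (hq₀ : 0 < q) (hq₁ : q ≤ 1) {f : E → F} (hf : f.Odd) (p : F)
    (hint : Integrable (fun x => ‖f x + p‖ ^ q) μ) :
    ‖p‖ ≤ 2 ^ (q⁻¹ - 1) * (⨍ x, ‖f x + p‖ ^ q ∂μ) ^ q⁻¹ := by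
  have pointwise (x : E) : (2 * ‖p‖) ^ q ≤ ‖f x + p‖ ^ q + ‖f (-x) + p‖ ^ q := by
    rw [hf x]
    exact two_mul_norm_rpow_le_norm_add_rpow_add_norm_neg_add_rpow hq₀.le hq₁ (f x) p
  have average_nonneg : 0 ≤ ⨍ x, ‖f x + p‖ ^ q ∂μ := integral_nonneg fun x => by positivity
  exact le_two_rpow_mul_rpow_inv_of_two_mul_rpow_le (norm_nonneg p) average_nonneg hq₀
    (le_two_mul_average_of_forall_le_add_comp_neg hint pointwise)

end NegInvariant

theorem stmt15_general {E F : Type*} [NormedAddCommGroup E] [ProperSpace E] [MeasurableSpace E]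
    [BorelSpace E] [NormedAddCommGroup F] [NormedSpace ℝ F] (μ : Measure E) [μ.IsNegInvariant]
    [μ.IsOpenPosMeasure] [IsFiniteMeasureOnCompacts μ] {q : ℝ} (hq₀ : 0 < q) (hq₁ : q ≤ 1)
    {f : E → F} (hf : Continuous f) (hodd : f.Odd) (p : F) {r : ℝ} (hr : 0 < r) :
    ‖p‖ ≤ 2 ^ (q⁻¹ - 1) * (⨍ x in ball (0 : E) r, ‖f x + p‖ ^ q ∂μ) ^ q⁻¹ := by
  have : (μ.restrict (ball 0 r)).IsNegInvariant := isNegInvariant_restrict (by simp)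
  have : IsFiniteMeasure (μ.restrict (ball 0 r)) :=
    isFiniteMeasure_restrict.2 measure_ball_lt_top.ne
  have : NeZero (μ.restrict (ball 0 r)) :=
    ⟨Measure.restrict_eq_zero.not.2 (measure_ball_pos μ 0 hr).ne'⟩
  have hcont : Continuous fun x => ‖f x + p‖ ^ q :=
    (hf.add continuous_const).norm.rpow_const fun _ => Or.inr hq₀.le
  have hint : IntegrableOn (fun x => ‖f x + p‖ ^ q) (ball 0 r) μ :=
    (hcont.continuousOn.integrableOn_compact (isCompact_closedBall 0 r)).mono_set
      ball_subset_closedBall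
  exact norm_le_two_rpow_mul_average_norm_odd_add_rpow hq₀ hq₁ hodd p hint

/-- the constant term of an affine map `x ↦ Sx + p` is controlled by the
normalized `L^{1/2}` quasi-norm over any ball centered at the origin. -/
theorem stmt15 (d : ℕ) :
    ∃ C : ℝ, 0 < C ∧
      ∀ S : Euc d →L[ℝ] Euc d, (∀ ξ η : Euc d, ⟪S ξ, η⟫ = ⟪ξ, S η⟫) →
      ∀ p : Euc d, ∀ r : ℝ, 0 < r →
        ‖p‖ ≤ C * (⨍ x in ball (0 : Euc d) r, Real.sqrt ‖S x + p‖) ^ 2 := by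
  refine ⟨2, two_pos, fun S _ p r hr => ?_⟩
  simpa [Real.sqrt_eq_rpow, show (2 : ℝ) - 1 = 1 by norm_num] using
    stmt15_general volume (q := 1 / 2) (by norm_num) (by norm_num) S.continuous (map_neg S) p hr
end

section
/- There exists a constant C(d) > 0, depending only on the dimension d, such that for every symmetric (0,3)-tensor 𝒮 on ℝ^d, every symmetric d×d matrix P and every r > 0, |P| ≤ C(d) ( ⨍_{B_r(0)} |⟨𝒮,x⟩ + P|^{1/2} dx )², where ⟨𝒮,x⟩ is the d×d matrix with entries x_k 𝒮^{i,j,k} and |·| denotes the matrix operator norm. -/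
open MeasureTheory Metric Filter
open scoped RealInnerProductSpace ENNReal Topology

/-!
If `φ` is odd, it cancels between the values of `φ + b` at `x` and `-x`:
`2 b = (φ x + b) + (φ (-x) + b)`. As `t ↦ t ^ p` is subadditive for `p ≤ 1`, this gives
`(2 ‖b‖) ^ p ≤ ‖φ x + b‖ ^ p + ‖φ (-x) + b‖ ^ p`, and the two terms on the right have the same
average because the ball and the measure are invariant under `x ↦ -x`.
-/

theorem rpow_two_mul_norm_le {F : Type*} [SeminormedAddCommGroup F] [NormedSpace ℝ F] (a b : F)
    {p : ℝ} (hp : 0 ≤ p) (hp₁ : p ≤ 1) :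
    (2 * ‖b‖) ^ p ≤ ‖a + b‖ ^ p + ‖-a + b‖ ^ p := by
  have norm_two_mul_le : 2 * ‖b‖ ≤ ‖a + b‖ + ‖-a + b‖ := calc
    2 * ‖b‖ = ‖(2 : ℝ) • b‖ := by rw [norm_smul, Real.norm_two]
    _ = ‖(a + b) + (-a + b)‖ := by rw [two_smul]; abel_nf
    _ ≤ ‖a + b‖ + ‖-a + b‖ := norm_add_le _ _
  calc (2 * ‖b‖) ^ p ≤ (‖a + b‖ + ‖-a + b‖) ^ p := by gcongr
    _ ≤ ‖a + b‖ ^ p + ‖-a + b‖ ^ p :=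
      Real.rpow_add_le_add_rpow (norm_nonneg _) (norm_nonneg _) hp hp₁

section NegInvariant

variable {G : Type*} [InvolutiveNeg G] [MeasurableSpace G] [MeasurableNeg G]
  {μ : Measure G} [μ.IsNegInvariant] {s : Set G}

theorem measurePreserving_neg_restrict (hs : Neg.neg ⁻¹' s = s) :
    MeasurePreserving Neg.neg (μ.restrict s) (μ.restrict s) := by
  simpa only [hs] using (Measure.measurePreserving_neg μ).restrict_preimage_emb
    (MeasurableEquiv.neg G).measurableEmbedding s

theorem integrableOn_comp_neg {E : Type*} [NormedAddCommGroup E] {f : G → E}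
    (hs : Neg.neg ⁻¹' s = s) (hf : IntegrableOn f s μ) : IntegrableOn (fun x => f (-x)) s μ :=
  (measurePreserving_neg_restrict hs).integrable_comp_of_integrable hf

theorem setAverage_add_comp_neg {E : Type*} [NormedAddCommGroup E] [NormedSpace ℝ E] {f : G → E}
    (hs : Neg.neg ⁻¹' s = s) (hf : IntegrableOn f s μ) :
    ⨍ x in s, (f x + f (-x)) ∂μ = (2 : ℝ) • ⨍ x in s, f x ∂μ := by
  have integral_comp_neg : ∫ x in s, f (-x) ∂μ = ∫ x in s, f x ∂μ :=
    (measurePreserving_neg_restrict hs).integral_comp (MeasurableEquiv.neg G).measurableEmbedding f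
  rw [setAverage_eq, setAverage_eq, integral_add hf (integrableOn_comp_neg hs hf),
    integral_comp_neg, ← two_smul ℝ, smul_comm]

theorem rpow_two_mul_norm_le_setAverage {F : Type*} [SeminormedAddCommGroup F] [NormedSpace ℝ F]
    {φ : G → F} (hφ : φ.Odd) (b : F) {p : ℝ} (hp : 0 ≤ p) (hp₁ : p ≤ 1)
    (hs : Neg.neg ⁻¹' s = s) (hμ : μ s ≠ 0) (hμ' : μ s ≠ ∞)
    (hint : IntegrableOn (fun x => ‖φ x + b‖ ^ p) s μ) :
    (2 * ‖b‖) ^ p ≤ 2 * ⨍ x in s, ‖φ x + b‖ ^ p ∂μ := by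
  have integrable_sum : IntegrableOn (fun x => ‖φ x + b‖ ^ p + ‖φ (-x) + b‖ ^ p) s μ :=
    hint.add (integrableOn_comp_neg hs hint)
  obtain ⟨x, -, hx⟩ := exists_le_setAverage hμ hμ' integrable_sum
  calc (2 * ‖b‖) ^ p ≤ ‖φ x + b‖ ^ p + ‖φ (-x) + b‖ ^ p := by
        simpa only [hφ x] using rpow_two_mul_norm_le (φ x) b hp hp₁
    _ ≤ ⨍ x in s, (‖φ x + b‖ ^ p + ‖φ (-x) + b‖ ^ p) ∂μ := hx
    _ = 2 * ⨍ x in s, ‖φ x + b‖ ^ p ∂μ := setAverage_add_comp_neg hs hint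

end NegInvariant

theorem le_rpow_mul_rpow_of_rpow_two_mul_le {a t p : ℝ} (ha : 0 ≤ a) (hp : 0 < p)
    (h : (2 * a) ^ p ≤ 2 * t) : a ≤ 2 ^ (p⁻¹ - 1) * t ^ p⁻¹ := by
  have ht : 0 ≤ t := by linarith [Real.rpow_nonneg (mul_nonneg zero_le_two ha) p]
  have two_mul_le : 2 * a ≤ 2 ^ p⁻¹ * t ^ p⁻¹ := by
    rw [← Real.mul_rpow zero_le_two ht]
    exact (Real.le_rpow_inv_iff_of_pos (by positivity) (by positivity) hp).2 h
  calc a ≤ 2 ^ p⁻¹ * t ^ p⁻¹ / 2 := by linarith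
    _ = 2 ^ (p⁻¹ - 1) * t ^ p⁻¹ := by rw [Real.rpow_sub_one two_ne_zero]; ring

theorem stmt16_general {E F : Type*} [SeminormedAddCommGroup E] [ProperSpace E]
    [MeasurableSpace E] [BorelSpace E] [SeminormedAddCommGroup F] [NormedSpace ℝ F]
    (μ : Measure E) [μ.IsNegInvariant] [μ.IsOpenPosMeasure] [IsFiniteMeasureOnCompacts μ]
    {φ : E → F} (hφ : φ.Odd) (hφc : Continuous φ) (b : F) {p : ℝ} (hp : 0 < p) (hp₁ : p ≤ 1)
    {r : ℝ} (hr : 0 < r) :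
    ‖b‖ ≤ 2 ^ (p⁻¹ - 1) * (⨍ x in ball 0 r, ‖φ x + b‖ ^ p ∂μ) ^ p⁻¹ := by
  have neg_ball : Neg.neg ⁻¹' ball (0 : E) r = ball 0 r := by ext x; simp
  have continuous_rpow : Continuous fun x => ‖φ x + b‖ ^ p :=
    (hφc.add_const b).norm.rpow_const fun _ => Or.inr hp.le
  have integrable_rpow : IntegrableOn (fun x => ‖φ x + b‖ ^ p) (ball 0 r) μ :=
    continuous_rpow.locallyIntegrable.integrableOn_isCompact (isCompact_closedBall 0 r)
      |>.mono_set ball_subset_closedBall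
  exact le_rpow_mul_rpow_of_rpow_two_mul_le (norm_nonneg b) hp <|
    rpow_two_mul_norm_le_setAverage hφ b hp.le hp₁ neg_ball (measure_ball_pos μ 0 hr).ne'
      measure_ball_lt_top.ne integrable_rpow

/-- the constant term of a matrix-valued affine map `x ↦ ⟨𝒮,x⟩ + P` is
controlled by the normalized `L^{1/2}` quasi-norm over any ball centered at the origin. -/
theorem stmt16 (d : ℕ) :
    ∃ C : ℝ, 0 < C ∧
      ∀ S : Euc d →L[ℝ] Euc d →L[ℝ] Euc d →L[ℝ] ℝ, Sym3 S →
      ∀ P : Euc d →L[ℝ] Euc d →L[ℝ] ℝ, (∀ ξ η : Euc d, P ξ η = P η ξ) →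
      ∀ r : ℝ, 0 < r →
        ‖P‖ ≤ C * (⨍ x in ball (0 : Euc d) r, Real.sqrt ‖S x + P‖) ^ 2 := by
  refine ⟨2, two_pos, fun S _ P _ r hr => ?_⟩
  simpa [Real.sqrt_eq_rpow, show (2 : ℝ) - 1 = 1 by norm_num] using stmt16_general volume
    (fun x => map_neg S x) S.continuous P one_half_pos one_half_lt_one.le hr
end
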